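/- arXiv:1503.01284 — 2 statements merged into one kernel-verified Lean document; each statement's English description precedes it below -/
import Mathlib

section
/- Let n ≥ 2 and let E ⊂ ℝⁿ be an 𝓗ˢ-measurable set with 0 < 𝓗ˢ(E) < ∞, where 0 < s = dim_H E ≤ 1. Then there exists a set X ⊂ S^{n−1} of unit vectors with dim_H X ≤ (n−2) + s such that for every unit vector e ∈ S^{n−1} \ X and every 𝓗ˢ-measurable set F ⊂ E with 𝓗ˢ(F) > 0, the set {⟨x, e⟩ : x ∈ F} ⊂ ℝ has Hausdorff dimension equal to s. -/
open MeasureTheory RealInnerProductSpace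

open Classical in
/-- Greedy construction of a maximal weight subject to finitely many packing constraints. -/
lemma slp_exists_tight {X ι : Type*} (P : Finset X) (I : Finset ι) (B : ι → Set X)
    (c : ι → ℝ) (hc : ∀ i ∈ I, 0 ≤ c i) (hcov : ∀ p ∈ P, ∃ i ∈ I, p ∈ B i) :
    ∃ w : X → ℝ, (∀ x, 0 ≤ w x) ∧ (∀ i ∈ I, ∑ p ∈ P with p ∈ B i, w p ≤ c i) ∧
      ∀ p ∈ P, ∃ i ∈ I, p ∈ B i ∧ c i ≤ ∑ q ∈ P with q ∈ B i, w q := by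
  suffices H : ∀ S : Finset X, S ⊆ P → ∃ w : X → ℝ, (∀ x, 0 ≤ w x) ∧
      (∀ i ∈ I, ∑ p ∈ P with p ∈ B i, w p ≤ c i) ∧
      ∀ p ∈ S, ∃ i ∈ I, p ∈ B i ∧ c i ≤ ∑ q ∈ P with q ∈ B i, w q from H P (Finset.Subset.refl _)
  intro S
  induction S using Finset.induction_on with
  | empty => 
    intro _
    exact ⟨fun _ => 0, by simp, by simpa using hc, by simp⟩
  | insert p S hp ih =>
    intro hS
    obtain ⟨w, hw0, hw1, hw2⟩ := ih (fun x hx => hS (Finset.mem_insert_of_mem hx))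
    have hpP : p ∈ P := hS (Finset.mem_insert_self _ _)
    let J := I.filter (fun i => p ∈ B i)
    have hJ : J.Nonempty := by
      obtain ⟨i, hi, hpi⟩ := hcov p hpP
      exact ⟨i, Finset.mem_filter.2 ⟨hi, hpi⟩⟩
    obtain ⟨i0, hi0, hmin⟩ := Finset.exists_min_image J
      (fun i => c i - ∑ q ∈ P with q ∈ B i, w q) hJ
    set ε := c i0 - ∑ q ∈ P with q ∈ B i0, w q with hε
    have hi0I := (Finset.mem_filter.1 hi0).1
    have hi0p := (Finset.mem_filter.1 hi0).2
    have hε0 : 0 ≤ ε := sub_nonneg.2 (hw1 i0 hi0I)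
    have hsum : ∀ i, ∑ q ∈ P with q ∈ B i, (w q + if q = p then ε else 0) =
        ∑ q ∈ P with q ∈ B i, w q + if p ∈ B i then ε else 0 := by
      intro i
      rw [Finset.sum_add_distrib, Finset.sum_ite_eq']
      simp [hpP]
    refine ⟨fun q => w q + if q = p then ε else 0, ?_, ?_, ?_⟩
    · intro x
      have := hw0 x
      simp only
      split_ifs <;> linarith
    · intro i hi
      rw [hsum]
      by_cases h : p ∈ B i
      · have := hmin i (Finset.mem_filter.2 ⟨hi, h⟩)
        simp only [h, if_true]
        linarith
      · simpa [h] using hw1 i hi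
    · intro q hq
      rcases Finset.mem_insert.1 hq with rfl | hq
      · refine ⟨i0, hi0I, hi0p, ?_⟩
        rw [hsum]
        simp only [hi0p, if_true]
        linarith
      · obtain ⟨i, hi, hqi, hle⟩ := hw2 q hq
        refine ⟨i, hi, hqi, hle.trans ?_⟩
        rw [hsum]
        split_ifs <;> linarith

open Classical in
/-- Discrete Frostman lemma. -/
lemma slp_frostman {X : Type*} [PseudoMetricSpace X] (P : Finset X) (k : ℕ) (u : ℝ) (hu : 0 ≤ u)
    (hP : ∀ p ∈ P, ∀ q ∈ P, dist p q ≤ 2) :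
    ∃ w : X → ℝ, (∀ x, 0 ≤ w x) ∧
      (∀ x : X, ∀ r : ℝ, (1 / 2 : ℝ) ^ k ≤ r →
        ∑ p ∈ P with dist p x ≤ r, w p ≤ (4 * r) ^ u) ∧
      ∃ T : Finset (X × ℕ), (∀ t ∈ T, t.2 ≤ k) ∧
        (∀ p ∈ P, ∃ t ∈ T, dist p t.1 ≤ 5 * (2 * (1 / 2 : ℝ) ^ t.2)) ∧
        ∑ t ∈ T, (2 * (1 / 2 : ℝ) ^ t.2) ^ u ≤ ∑ p ∈ P, w p := by
  obtain ⟨w, hw0, hw1, hw2⟩ := slp_exists_tight P (P ×ˢ Finset.range (k + 1))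
    (fun i : X × ℕ => Metric.closedBall i.1 (2 * (1 / 2 : ℝ) ^ i.2))
    (fun i => (2 * (1 / 2 : ℝ) ^ i.2) ^ u) (fun i _ => by positivity)
    (fun p hp => ⟨(p, 0), by simp [hp], by simp⟩)
  simp only [Metric.mem_closedBall] at hw1 hw2
  refine ⟨w, hw0, ?_, ?_⟩
  · intro x r hr
    have hr0 : 0 < r := lt_of_lt_of_le (by positivity) hr
    rcases Finset.eq_empty_or_nonempty (P.filter (fun p => dist p x ≤ r)) with h | ⟨p, hp⟩
    · rw [h]; simp; positivity
    obtain ⟨hpP, hpx⟩ := Finset.mem_filter.1 hp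
    -- find j
    have key : ∃ j ≤ k, (∀ q ∈ P, dist q x ≤ r → dist q p ≤ 2 * (1 / 2 : ℝ) ^ j) ∧
        (2 * (1 / 2 : ℝ) ^ j) ≤ 4 * r := by
      by_cases h1 : 1 ≤ r
      · exact ⟨0, Nat.zero_le _, fun q hq _ => by simpa using hP q hq p hpP, by
          simp; linarith⟩
      · push Not at h1
        obtain ⟨j, hj1, hj2⟩ := exists_nat_pow_near_of_lt_one (x := r) (y := (1 / 2 : ℝ)) hr0 h1.le
          (by norm_num) (by norm_num)
        -- (1/2)^(j+1) < r ≤ (1/2)^j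
        refine ⟨j, ?_, ?_, ?_⟩
        · by_contra hjk
          push Not at hjk
          have : (1 / 2 : ℝ) ^ j ≤ (1 / 2) ^ (k + 1) :=
            pow_le_pow_of_le_one (by norm_num) (by norm_num) hjk
          have h3 : (1 / 2 : ℝ) ^ (k + 1) < (1 / 2) ^ k :=
            pow_lt_pow_right_of_lt_one₀ (by norm_num) (by norm_num) (Nat.lt_succ_self k)
          linarith
        · intro q _ hqx
          calc dist q p ≤ dist q x + dist p x := dist_triangle_right _ _ _
            _ ≤ r + r := by gcongr
            _ ≤ _ := by linarith
        · rw [pow_succ] at hj1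
          linarith
    obtain ⟨j, hjk, hj1, hj2⟩ := key
    calc ∑ p ∈ P with dist p x ≤ r, w p
        ≤ ∑ q ∈ P with dist q p ≤ 2 * (1 / 2 : ℝ) ^ j, w q := by
          apply Finset.sum_le_sum_of_subset_of_nonneg
          · intro q hq
            obtain ⟨hq1, hq2⟩ := Finset.mem_filter.1 hq
            exact Finset.mem_filter.2 ⟨hq1, hj1 q hq1 hq2⟩
          · intro i _ _; exact hw0 i
      _ ≤ (2 * (1 / 2 : ℝ) ^ j) ^ u := hw1 (p, j) (by simp [hpP]; omega)
      _ ≤ (4 * r) ^ u := Real.rpow_le_rpow (by positivity) hj2 hu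
  · -- tight balls
    let t : Set (X × ℕ) := {i | i ∈ P ×ˢ Finset.range (k + 1) ∧ (2 * (1 / 2 : ℝ) ^ i.2) ^ u ≤
      ∑ q ∈ P with dist q i.1 ≤ 2 * (1 / 2 : ℝ) ^ i.2, w q}
    have htf : t.Finite := (P ×ˢ Finset.range (k + 1)).finite_toSet.subset (fun i hi => hi.1)
    obtain ⟨v, hvt, hdisj, hcov⟩ := Vitali.exists_disjoint_subfamily_covering_enlargement_closedBall
      t (fun i => i.1) (fun i => 2 * (1 / 2 : ℝ) ^ i.2) 2 (by
        intro a _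
        have : (1 / 2 : ℝ) ^ a.2 ≤ 1 := pow_le_one₀ (by norm_num) (by norm_num)
        linarith) 5 (by norm_num)
    have hvf : v.Finite := htf.subset hvt
    refine ⟨hvf.toFinset, ?_, ?_, ?_⟩
    · intro i hi
      have := (hvt (hvf.mem_toFinset.1 hi)).1
      have := (Finset.mem_product.1 this).2
      rw [Finset.mem_range] at this
      omega
    · intro p hp
      obtain ⟨i, hi, hpi, hle⟩ := hw2 p hp
      obtain ⟨b, hb, hsub⟩ := hcov i ⟨hi, hle⟩
      exact ⟨b, hvf.mem_toFinset.2 hb, hsub hpi⟩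
    · calc ∑ t ∈ hvf.toFinset, (2 * (1 / 2 : ℝ) ^ t.2) ^ u
          ≤ ∑ t ∈ hvf.toFinset, ∑ q ∈ P with dist q t.1 ≤ 2 * (1 / 2 : ℝ) ^ t.2, w q :=
            Finset.sum_le_sum (fun i hi => (hvt (hvf.mem_toFinset.1 hi)).2)
        _ = ∑ q ∈ hvf.toFinset.biUnion
              (fun t => P.filter (fun q => dist q t.1 ≤ 2 * (1 / 2 : ℝ) ^ t.2)), w q := by
            rw [Finset.sum_biUnion]
            intro i hi j hj hij
            have hd := hdisj (hvf.mem_toFinset.1 hi) (hvf.mem_toFinset.1 hj) hij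
            rw [Function.onFun, Finset.disjoint_left]
            intro q hq hq'
            exact Set.disjoint_left.1 hd (Finset.mem_filter.1 hq).2 (Finset.mem_filter.1 hq').2
        _ ≤ ∑ p ∈ P, w p := by
            apply Finset.sum_le_sum_of_subset_of_nonneg
            · intro q hq
              obtain ⟨i, _, hq⟩ := Finset.mem_biUnion.1 hq
              exact (Finset.mem_filter.1 hq).1
            · intro i _ _; exact hw0 i

/-- Covering the unit sphere of a `d`-dimensional space. -/
lemma slp_sphere_cover {V : Type*} [NormedAddCommGroup V] [InnerProductSpace ℝ V]
    [FiniteDimensional ℝ V] (d : ℕ) (hd : Module.finrank ℝ V = d + 1) (ρ : ℝ) (hρ0 : 0 < ρ)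
    (hρ1 : ρ ≤ 1) :
    ∃ N : Finset V, (N.card : ℝ) * ρ ^ d ≤ (d + 1) * 20 ^ (d + 1) ∧
      ∀ e : V, ‖e‖ = 1 → ∃ v ∈ N, dist e v ≤ ρ := by
  let _ : MeasurableSpace V := borel V
  have : BorelSpace V := ⟨rfl⟩
  have hnt : Nontrivial V := Module.nontrivial_of_finrank_pos (R := ℝ) (by omega)
  set μ : Measure V := Measure.addHaar with hμ
  set a : ℝ := ρ / 10 with ha
  have ha0 : 0 < a := by positivity
  have ha1 : a ≤ 1 / 10 := by rw [ha]; linarith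
  obtain ⟨v, hvt, hdisj, hcov⟩ := Vitali.exists_disjoint_subfamily_covering_enlargement_closedBall
      (Metric.sphere (0 : V) 1) id (fun _ => a) a (fun _ _ => le_refl _) 5 (by norm_num)
  set c : ℝ := μ.real (Metric.ball (0 : V) 1) with hc
  have hc0 : 0 < c := by
    refine ENNReal.toReal_pos (Metric.measure_ball_pos μ _ one_pos).ne' measure_ball_lt_top.ne
  have hball : ∀ (x : V) (r : ℝ), 0 ≤ r → μ.real (Metric.closedBall x r) = r ^ (d + 1) * c := by
    intro x r hr
    rw [Measure.real, Measure.addHaar_closedBall _ _ hr, hd, ENNReal.toReal_mul,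
      ENNReal.toReal_ofReal (by positivity)]
    rfl
  have hball' : ∀ (x : V) (r : ℝ), 0 ≤ r → μ.real (Metric.ball x r) = r ^ (d + 1) * c := by
    intro x r hr
    rw [Measure.real, Measure.addHaar_ball _ _ hr, hd, ENNReal.toReal_mul,
      ENNReal.toReal_ofReal (by positivity)]
    rfl
  have hcard : ∀ S : Finset V, (S : Set V) ⊆ v → (S.card : ℝ) * ρ ^ d ≤ (d + 1) * 20 ^ (d + 1) := by
    intro S hS
    have h1 : μ.real (⋃ x ∈ S, Metric.closedBall x a) = S.card * (a ^ (d + 1) * c) := by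
      rw [measureReal_biUnion_finset (h := fun x _ => measure_closedBall_lt_top.ne)]
      · rw [Finset.sum_congr rfl (fun x _ => hball x a ha0.le)]
        simp
      · intro x hx y hy hxy
        exact hdisj (hS hx) (hS hy) hxy
      · intro x _; exact Metric.isClosed_closedBall.measurableSet
    have h2 : (⋃ x ∈ S, Metric.closedBall x a) ⊆
        Metric.closedBall (0 : V) (1 + a) \ Metric.ball (0 : V) (1 - a) := by
      intro y hy
      simp only [Set.mem_iUnion] at hy
      obtain ⟨x, hx, hyx⟩ := hy
      have hx1 : ‖x‖ = 1 := by simpa using hvt (hS hx)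
      rw [Metric.mem_closedBall, dist_eq_norm] at hyx
      simp only [Set.mem_sdiff, Metric.mem_closedBall, dist_zero_right, Metric.mem_ball, not_lt]
      have e1 := norm_sub_norm_le y x
      have e2 := norm_sub_norm_le x y
      rw [norm_sub_rev x y] at e2
      constructor <;> linarith
    have h3 : S.card * (a ^ (d + 1) * c) ≤ ((1 + a) ^ (d + 1) - (1 - a) ^ (d + 1)) * c := by
      rw [← h1]
      refine (measureReal_mono h2 (measure_ne_top_of_subset Set.sdiff_subset
        measure_closedBall_lt_top.ne)).trans ?_
      rw [measureReal_sdiff _ Metric.isOpen_ball.measurableSet measure_closedBall_lt_top.ne,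
        hball _ _ (by linarith), hball' _ _ (by linarith)]
      · linarith
      · exact Metric.ball_subset_closedBall.trans (Metric.closedBall_subset_closedBall (by linarith))
    have h4 : S.card * a ^ (d + 1) ≤ (1 + a) ^ (d + 1) - (1 - a) ^ (d + 1) := by
      have : S.card * a ^ (d + 1) * c ≤ ((1 + a) ^ (d + 1) - (1 - a) ^ (d + 1)) * c := by
        linarith
      exact le_of_mul_le_mul_right this hc0
    have h5 : (1 + a) ^ (d + 1) - (1 - a) ^ (d + 1) ≤ 2 * a * ((d + 1) * 2 ^ d) := by
      rw [← (Commute.all (1 + a) (1 - a)).mul_geom_sum₂]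
      have : (1 + a) - (1 - a) = 2 * a := by ring
      rw [this]
      gcongr
      calc ∑ i ∈ Finset.range (d + 1), (1 + a) ^ i * (1 - a) ^ (d + 1 - 1 - i)
          ≤ ∑ i ∈ Finset.range (d + 1), (2 : ℝ) ^ d := by
            apply Finset.sum_le_sum
            intro i hi
            rw [Finset.mem_range] at hi
            calc (1 + a) ^ i * (1 - a) ^ (d + 1 - 1 - i) ≤ 2 ^ i * 1 := by
                  have e1 : (0 : ℝ) ≤ 1 - a := by linarith
                  have e2 : (1 - a) ^ (d + 1 - 1 - i) ≤ 1 := pow_le_one₀ e1 (by linarith)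
                  have e3 : (1 + a) ^ i ≤ 2 ^ i := by gcongr; linarith
                  exact mul_le_mul e3 e2 (by positivity) (by positivity)
              _ ≤ 2 ^ d := by
                  rw [mul_one]
                  exact pow_le_pow_right₀ (by norm_num) (by omega)
        _ = (d + 1) * 2 ^ d := by simp
    have h6 : (S.card * a ^ d) * a ≤ (2 * ((d + 1) * 2 ^ d)) * a := by
      calc (S.card * a ^ d) * a = S.card * a ^ (d + 1) := by ring
        _ ≤ _ := h4.trans h5
        _ = _ := by ring
    have h7 := le_of_mul_le_mul_right h6 ha0
    have h8 : ρ ^ d = 10 ^ d * a ^ d := by rw [← mul_pow, ha]; congr 1; ring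
    rw [h8]
    calc (S.card : ℝ) * (10 ^ d * a ^ d) = 10 ^ d * (S.card * a ^ d) := by ring
      _ ≤ 10 ^ d * (2 * ((d + 1) * 2 ^ d)) := by gcongr
      _ = (d + 1) * (2 * (10 ^ d * 2 ^ d)) := by ring
      _ = (d + 1) * (2 * 20 ^ d) := by rw [← mul_pow]; norm_num
      _ ≤ (d + 1) * (20 * 20 ^ d) := by gcongr; norm_num
      _ = _ := by ring
  have hfin : v.Finite := by
    by_contra hinf
    have hinf : v.Infinite := hinf
    obtain ⟨m, hm⟩ := exists_nat_gt (((d + 1) * 20 ^ (d + 1) : ℝ) / ρ ^ d)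
    obtain ⟨S, hS, hSc⟩ := hinf.exists_subset_card_eq m
    have := hcard S hS
    rw [hSc, ← le_div_iff₀ (by positivity)] at this
    linarith
  refine ⟨hfin.toFinset, hcard _ (by simp), ?_⟩
  intro e he
  obtain ⟨b, hb, hsub⟩ := hcov e (by simpa using he)
  refine ⟨b, hfin.mem_toFinset.2 hb, ?_⟩
  have := hsub (Metric.mem_closedBall_self ha0.le)
  rw [Metric.mem_closedBall] at this
  refine this.trans ?_
  rw [ha]; linarith

lemma slp_band_cover {n : ℕ} (z : EuclideanSpace ℝ (Fin (n + 2))) (hz : ‖z‖ = 1)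
    (ρ : ℝ) (hρ0 : 0 < ρ) (hρ1 : ρ ≤ 1 / 2) :
    ∃ N : Finset (EuclideanSpace ℝ (Fin (n + 2))),
      (N.card : ℝ) * ρ ^ n ≤ (n + 1) * 20 ^ (n + 1) ∧
      ∀ e : EuclideanSpace ℝ (Fin (n + 2)), ‖e‖ = 1 → |⟪z, e⟫| ≤ ρ → ∃ v ∈ N, dist e v ≤ 3 * ρ := by
  classical
  have hz0 : z ≠ 0 := by rintro rfl; simp at hz
  have hfr : Module.finrank ℝ (ℝ ∙ z)ᗮ = n + 1 := by
    have : Fact (Module.finrank ℝ (EuclideanSpace ℝ (Fin (n + 2))) = (n + 1) + 1) := ⟨by simp⟩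
    exact Submodule.finrank_orthogonal_span_singleton hz0
  obtain ⟨N, hN, hcov⟩ := slp_sphere_cover n hfr ρ hρ0 (by linarith)
  refine ⟨N.image (Subtype.val : (ℝ ∙ z)ᗮ → EuclideanSpace ℝ (Fin (n + 2))), ?_, ?_⟩
  · refine le_trans ?_ hN
    gcongr
    exact Finset.card_image_le
  · intro e he hze
    set e' : EuclideanSpace ℝ (Fin (n + 2)) := e - ⟪z, e⟫ • z with he'
    have hmem : e' ∈ (ℝ ∙ z)ᗮ := by
      rw [Submodule.mem_orthogonal_singleton_iff_inner_right, he', inner_sub_right,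
        inner_smul_right, real_inner_self_eq_norm_sq, hz]
      ring
    have hd1 : ‖e - e'‖ ≤ ρ := by
      have : e - e' = ⟪z, e⟫ • z := by rw [he']; abel
      rw [this, norm_smul, hz, mul_one]
      exact hze
    have hn1 : 1 - ρ ≤ ‖e'‖ := by
      have := norm_sub_norm_le e e'
      linarith
    have hpos : 0 < ‖e'‖ := by linarith
    have hn2 : ‖e'‖ ≤ 1 := by
      have h1 : ‖e'‖ ^ 2 ≤ 1 := by
        rw [he', @norm_sub_sq_real, inner_smul_right, norm_smul, hz, he, real_inner_comm,
          mul_one, Real.norm_eq_abs, sq_abs]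
        nlinarith [sq_nonneg ⟪z, e⟫]
      nlinarith [norm_nonneg e']
    let f : (ℝ ∙ z)ᗮ := (‖e'‖⁻¹ : ℝ) • ⟨e', hmem⟩
    have hf : ‖f‖ = 1 := by
      simp only [f, norm_smul, norm_inv, norm_norm]
      exact inv_mul_cancel₀ hpos.ne'
    obtain ⟨v, hv, hdist⟩ := hcov f hf
    refine ⟨v, Finset.mem_image_of_mem _ hv, ?_⟩
    have hfd : dist e' (f : EuclideanSpace ℝ (Fin (n + 2))) ≤ ρ := by
      have hcoe : (f : EuclideanSpace ℝ (Fin (n + 2))) = (‖e'‖⁻¹ : ℝ) • e' := rfl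
      rw [hcoe, dist_eq_norm]
      have : e' - (‖e'‖⁻¹ : ℝ) • e' = (1 - ‖e'‖⁻¹) • e' := by rw [sub_smul, one_smul]
      rw [this, norm_smul, Real.norm_eq_abs]
      have h2 : |1 - ‖e'‖⁻¹| * ‖e'‖ = |(1 - ‖e'‖⁻¹) * ‖e'‖| := by
        rw [abs_mul, abs_of_pos hpos]
      rw [h2, sub_mul, inv_mul_cancel₀ hpos.ne', one_mul, abs_le]
      constructor <;> linarith
    have hd3 : dist (f : EuclideanSpace ℝ (Fin (n + 2))) v ≤ ρ := hdist
    have hd1' : dist e e' ≤ ρ := by rw [dist_eq_norm]; exact hd1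
    calc dist e v ≤ dist e e' + dist e' f + dist (f : EuclideanSpace ℝ (Fin (n + 2))) v :=
          dist_triangle4 _ _ _ _
      _ ≤ 3 * ρ := by linarith

lemma slp_sum_biUnion_le {ι X : Type*} [DecidableEq X] (N : Finset ι) (f : ι → Finset X) (w : X → ℝ)
    (hw : ∀ x, 0 ≤ w x) : ∑ p ∈ N.biUnion f, w p ≤ ∑ v ∈ N, ∑ p ∈ f v, w p := by
  classical
  induction N using Finset.induction_on with
  | empty => simp
  | insert a N ha ih =>
    rw [Finset.biUnion_insert, Finset.sum_insert ha]
    have h1 := Finset.sum_union_inter (s₁ := f a) (s₂ := N.biUnion f) (f := w)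
    have h2 : 0 ≤ ∑ x ∈ f a ∩ N.biUnion f, w x := Finset.sum_nonneg (fun i _ => hw i)
    linarith

open Classical in
lemma slp_band_weight (n : ℕ) (σ : ℝ) (hσ : 0 < σ) : ∃ C : ℝ, 0 < C ∧
    ∀ (P : Finset (EuclideanSpace ℝ (Fin (n + 2)))) (w : EuclideanSpace ℝ (Fin (n + 2)) → ℝ) (k : ℕ),
      (∀ x, 0 ≤ w x) → (∀ p ∈ P, ‖p‖ = 1) →
      (∀ (x : EuclideanSpace ℝ (Fin (n + 2))) (r : ℝ), (1 / 2 : ℝ) ^ k ≤ r →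
        ∑ p ∈ P with dist p x ≤ r, w p ≤ (4 * r) ^ (n + σ)) →
      ∀ z : EuclideanSpace ℝ (Fin (n + 2)), z ≠ 0 →
        ∑ p ∈ P with |⟪z, p⟫| ≤ (1 / 2 : ℝ) ^ k, w p ≤
          C * ((1 / 2 : ℝ) ^ k) ^ σ * (1 + ‖z‖ ^ (-σ)) := by
  set K : ℝ := (n + 1) * 20 ^ (n + 1) with hK
  set C1 : ℝ := K * 12 ^ (n + σ) with hC1
  set C2 : ℝ := 4 ^ (n + σ) * 2 ^ σ with hC2
  have hK0 : 0 < K := by positivity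
  have hC10 : 0 < C1 := by positivity
  have hC20 : 0 < C2 := by positivity
  refine ⟨C1 + C2, by positivity, ?_⟩
  intro P w k hw0 hP hw z hz
  set δ : ℝ := (1 / 2 : ℝ) ^ k with hδ
  have hδ0 : 0 < δ := by positivity
  have hz0 : 0 < ‖z‖ := norm_pos_iff.2 hz
  set ρ : ℝ := max δ (δ / ‖z‖) with hρ
  have hρδ : δ ≤ ρ := le_max_left _ _
  have hρ0 : 0 < ρ := lt_of_lt_of_le hδ0 hρδ
  have hρσ : ρ ^ σ ≤ δ ^ σ * (1 + ‖z‖ ^ (-σ)) := by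
    have h1 : 0 ≤ ‖z‖ ^ (-σ) := by positivity
    have h2 : 0 ≤ δ ^ σ := by positivity
    rcases max_cases δ (δ / ‖z‖) with ⟨h, _⟩ | ⟨h, _⟩
    · rw [hρ, h]; nlinarith
    · rw [hρ, h, Real.div_rpow hδ0.le hz0.le, Real.rpow_neg hz0.le, div_eq_mul_inv]; nlinarith
  suffices H : ∑ p ∈ P with |⟪z, p⟫| ≤ δ, w p ≤ (C1 + C2) * ρ ^ σ by
    refine H.trans ?_
    rw [mul_assoc]
    gcongr
  have hρσ0 : 0 ≤ ρ ^ σ := by positivity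
  by_cases hρ1 : ρ ≤ 1 / 2
  · set z' : EuclideanSpace ℝ (Fin (n + 2)) := (‖z‖⁻¹ : ℝ) • z with hz'
    have hz'1 : ‖z'‖ = 1 := by
      rw [hz', norm_smul, norm_inv, norm_norm, inv_mul_cancel₀ hz0.ne']
    obtain ⟨N, hN, hcov⟩ := slp_band_cover z' hz'1 ρ hρ0 hρ1
    have hsub : P.filter (fun p => |⟪z, p⟫| ≤ δ) ⊆
        N.biUnion (fun v => P.filter (fun p => dist p v ≤ 3 * ρ)) := by
      intro p hp
      obtain ⟨hpP, hpz⟩ := Finset.mem_filter.1 hp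
      have : |⟪z', p⟫| ≤ ρ := by
        rw [hz', real_inner_smul_left, abs_mul, abs_of_pos (inv_pos.2 hz0)]
        refine le_trans ?_ (le_max_right _ _)
        rw [div_eq_inv_mul]
        gcongr
      obtain ⟨v, hv, hd⟩ := hcov p (hP p hpP) this
      exact Finset.mem_biUnion.2 ⟨v, hv, Finset.mem_filter.2 ⟨hpP, hd⟩⟩
    calc ∑ p ∈ P with |⟪z, p⟫| ≤ δ, w p
        ≤ ∑ p ∈ N.biUnion (fun v => P.filter (fun p => dist p v ≤ 3 * ρ)), w p :=
          Finset.sum_le_sum_of_subset_of_nonneg hsub (fun i _ _ => hw0 i)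
      _ ≤ ∑ v ∈ N, ∑ p ∈ P with dist p v ≤ 3 * ρ, w p :=
          slp_sum_biUnion_le N (fun v => P.filter (fun p => dist p v ≤ 3 * ρ)) w hw0
      _ ≤ ∑ v ∈ N, (4 * (3 * ρ)) ^ (n + σ) :=
          Finset.sum_le_sum (fun v _ => hw v _ (by linarith))
      _ = (N.card * ρ ^ n) * (12 ^ (n + σ) * ρ ^ σ) := by
          rw [Finset.sum_const, nsmul_eq_mul, ← mul_assoc, Real.mul_rpow (by norm_num) hρ0.le,
            Real.rpow_add hρ0, Real.rpow_natCast]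
          norm_num
          ring
      _ ≤ K * (12 ^ (n + σ) * ρ ^ σ) := by gcongr
      _ = C1 * ρ ^ σ := by rw [hC1]; ring
      _ ≤ (C1 + C2) * ρ ^ σ := by gcongr; linarith
  · push Not at hρ1
    have h1 : 1 ≤ (2 * ρ) ^ σ := Real.one_le_rpow (by linarith) hσ.le
    have hk1 : δ ≤ 1 := pow_le_one₀ (by norm_num) (by norm_num)
    calc ∑ p ∈ P with |⟪z, p⟫| ≤ δ, w p
        ≤ ∑ p ∈ P with dist p 0 ≤ 1, w p := by
          apply Finset.sum_le_sum_of_subset_of_nonneg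
          · intro p hp
            obtain ⟨hpP, hpz⟩ := Finset.mem_filter.1 hp
            exact Finset.mem_filter.2 ⟨hpP, by simp [hP p hpP]⟩
          · exact fun i _ _ => hw0 i
      _ ≤ (4 * 1) ^ (n + σ) := hw 0 1 hk1
      _ ≤ 4 ^ (n + σ) * (2 * ρ) ^ σ := by
          rw [mul_one]
          exact le_mul_of_one_le_right (by positivity) h1
      _ = C2 * ρ ^ σ := by rw [Real.mul_rpow (by norm_num) hρ0.le, hC2]; ring
      _ ≤ (C1 + C2) * ρ ^ σ := by gcongr; linarith

open Classical in
open scoped ENNReal in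
lemma slp_content (n : ℕ) (σ : ℝ) (hσ : 0 < σ) : ∃ C : ℝ, 0 < C ∧
    ∀ (μ : Measure (EuclideanSpace ℝ (Fin (n + 2)))) [IsFiniteMeasure μ]
      (G : Set (EuclideanSpace ℝ (Fin (n + 2)))) (M : ℝ≥0∞),
      (∀ y ∈ G, ∫⁻ x, (1 + edist x y ^ (-σ)) ∂μ ≤ M) →
      ∀ (k : ℕ) (a : ℝ≥0∞) (A : Set (EuclideanSpace ℝ (Fin (n + 2)))),
      (∀ e ∈ A, ‖e‖ = 1) →
      (∀ e ∈ A, a ≤ ∫⁻ y in G, μ {x | |⟪x - y, e⟫| ≤ (1 / 2 : ℝ) ^ k} ∂μ) →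
      ∃ T : Finset (EuclideanSpace ℝ (Fin (n + 2)) × ℕ),
        A ⊆ ⋃ t ∈ T, Metric.closedBall t.1 (12 * (1 / 2 : ℝ) ^ t.2) ∧
        a * ∑ t ∈ T, Metric.ediam (Metric.closedBall t.1 (12 * (1 / 2 : ℝ) ^ t.2)) ^ (n + σ) ≤
          ENNReal.ofReal (C * ((1 / 2 : ℝ) ^ k) ^ σ) * M * μ G := by
  obtain ⟨C, hC0, hC⟩ := slp_band_weight n σ hσ
  refine ⟨12 ^ (n + σ) * C, by positivity, ?_⟩
  intro μ _ G M hG k a A hA hAa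
  set δ : ℝ := (1 / 2 : ℝ) ^ k with hδ
  have hδ0 : 0 < δ := by positivity
  have hu : 0 ≤ n + σ := by positivity
  have htb : TotallyBounded A := by
    refine (isCompact_sphere (0 : EuclideanSpace ℝ (Fin (n + 2))) 1).totallyBounded.subset ?_
    intro e he
    simpa using hA e he
  obtain ⟨P', hP'A, hP'f, hP'cov⟩ := htb.exists_subset (Metric.dist_mem_uniformity hδ0)
  set P := hP'f.toFinset with hP
  have hPA : ∀ p ∈ P, p ∈ A := fun p hp => hP'A (hP'f.mem_toFinset.1 hp)
  have hP1 : ∀ p ∈ P, ‖p‖ = 1 := fun p hp => hA p (hPA p hp)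
  obtain ⟨w, hw0, hw1, T, hTk, hTcov, hTsum⟩ := slp_frostman P k (n + σ) hu (by
    intro p hp q hq
    rw [dist_eq_norm]
    refine (norm_sub_le _ _).trans ?_
    rw [hP1 p hp, hP1 q hq]; norm_num)
  have hband := hC P w k hw0 hP1 hw1
  refine ⟨T, ?_, ?_⟩
  · intro e he
    have := hP'cov he
    simp only [Set.mem_iUnion, Set.mem_ofPred_eq] at this
    obtain ⟨p, hp, hd⟩ := this
    obtain ⟨t, ht, hdt⟩ := hTcov p (hP'f.mem_toFinset.2 hp)
    simp only [Set.mem_iUnion]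
    refine ⟨t, ht, ?_⟩
    rw [Metric.mem_closedBall]
    have h1 : δ ≤ (1 / 2 : ℝ) ^ t.2 :=
      pow_le_pow_of_le_one (by norm_num) (by norm_num) (hTk t ht)
    have h2 : (0 : ℝ) < (1 / 2 : ℝ) ^ t.2 := by positivity
    calc dist e t.1 ≤ dist e p + dist p t.1 := dist_triangle _ _ _
      _ ≤ 12 * (1 / 2 : ℝ) ^ t.2 := by linarith
  -- the main estimate
  have hmeas : ∀ p : EuclideanSpace ℝ (Fin (n + 2)), MeasurableSet
      {q : EuclideanSpace ℝ (Fin (n + 2)) × EuclideanSpace ℝ (Fin (n + 2)) |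
        |⟪q.2 - q.1, p⟫| ≤ δ} := by
    intro p
    apply IsClosed.measurableSet
    apply isClosed_le _ continuous_const
    fun_prop
  have hmeas1 : ∀ p y : EuclideanSpace ℝ (Fin (n + 2)), MeasurableSet
      {x : EuclideanSpace ℝ (Fin (n + 2)) | |⟪x - y, p⟫| ≤ δ} := by
    intro p y
    apply IsClosed.measurableSet
    apply isClosed_le _ continuous_const
    fun_prop
  have hmeas2 : ∀ p : EuclideanSpace ℝ (Fin (n + 2)),
      Measurable (fun y => μ {x : EuclideanSpace ℝ (Fin (n + 2)) | |⟪x - y, p⟫| ≤ δ}) := by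
    intro p
    exact measurable_measure_prodMk_left (hmeas p)
  have hpt : ∀ x y : EuclideanSpace ℝ (Fin (n + 2)),
      ∑ p ∈ P, Set.indicator {x | |⟪x - y, p⟫| ≤ δ} (fun _ => ENNReal.ofReal (w p)) x ≤
        ENNReal.ofReal (C * δ ^ σ) * (1 + edist x y ^ (-σ)) := by
    intro x y
    by_cases hxy : x = y
    · subst hxy
      rw [edist_self, ENNReal.zero_rpow_of_neg (by linarith), add_top, ENNReal.mul_top]
      · exact le_top
      · rw [Ne, ENNReal.ofReal_eq_zero, not_le]; positivity
    · have hz : x - y ≠ 0 := sub_ne_zero.2 hxy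
      have hz0 : 0 < ‖x - y‖ := norm_pos_iff.2 hz
      have h1 := hband (x - y) hz
      have h2 : ∑ p ∈ P, Set.indicator {x | |⟪x - y, p⟫| ≤ δ} (fun _ => ENNReal.ofReal (w p)) x =
          ENNReal.ofReal (∑ p ∈ P with |⟪x - y, p⟫| ≤ δ, w p) := by
        rw [ENNReal.ofReal_sum_of_nonneg (fun i _ => hw0 i), Finset.sum_filter]
        apply Finset.sum_congr rfl
        intro p _
        simp [Set.indicator_apply]
      rw [h2]
      refine (ENNReal.ofReal_le_ofReal h1).trans ?_
      rw [ENNReal.ofReal_mul (by positivity), ENNReal.ofReal_add (by norm_num) (by positivity),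
        ENNReal.ofReal_one, edist_dist, dist_eq_norm, ENNReal.ofReal_rpow_of_pos hz0]
  have hmain : a * ENNReal.ofReal (∑ p ∈ P, w p) ≤ ENNReal.ofReal (C * δ ^ σ) * M * μ G := by
    calc a * ENNReal.ofReal (∑ p ∈ P, w p)
        = ∑ p ∈ P, ENNReal.ofReal (w p) * a := by
          rw [ENNReal.ofReal_sum_of_nonneg (fun i _ => hw0 i), mul_comm, Finset.sum_mul]
      _ ≤ ∑ p ∈ P, ENNReal.ofReal (w p) * ∫⁻ y in G, μ {x | |⟪x - y, p⟫| ≤ δ} ∂μ := by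
          gcongr with p hp
          exact hAa p (hPA p hp)
      _ = ∫⁻ y in G, ∑ p ∈ P, ENNReal.ofReal (w p) * μ {x | |⟪x - y, p⟫| ≤ δ} ∂μ := by
          rw [lintegral_finsetSum _ (fun p _ => (hmeas2 p).const_mul _)]
          apply Finset.sum_congr rfl
          intro p _
          rw [lintegral_const_mul _ (hmeas2 p)]
      _ ≤ ∫⁻ y in G, ENNReal.ofReal (C * δ ^ σ) * M ∂μ := by
          apply setLIntegral_mono measurable_const
          intro y hy
          calc ∑ p ∈ P, ENNReal.ofReal (w p) * μ {x | |⟪x - y, p⟫| ≤ δ}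
              = ∫⁻ x, ∑ p ∈ P, Set.indicator {x | |⟪x - y, p⟫| ≤ δ}
                  (fun _ => ENNReal.ofReal (w p)) x ∂μ := by
                rw [lintegral_finsetSum _
                  (fun p _ => (measurable_const.indicator (hmeas1 p y)))]
                apply Finset.sum_congr rfl
                intro p _
                rw [lintegral_indicator_const (hmeas1 p y)]
            _ ≤ ∫⁻ x, ENNReal.ofReal (C * δ ^ σ) * (1 + edist x y ^ (-σ)) ∂μ :=
                lintegral_mono (fun x => hpt x y)
            _ = ENNReal.ofReal (C * δ ^ σ) * ∫⁻ x, (1 + edist x y ^ (-σ)) ∂μ :=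
                lintegral_const_mul' _ _ ENNReal.ofReal_ne_top
            _ ≤ ENNReal.ofReal (C * δ ^ σ) * M := by gcongr; exact hG y hy
      _ = ENNReal.ofReal (C * δ ^ σ) * M * μ G := by simp
  have hdiam : ∑ t ∈ T, Metric.ediam (Metric.closedBall t.1 (12 * (1 / 2 : ℝ) ^ t.2)) ^ (n + σ) ≤
      ENNReal.ofReal (12 ^ (n + σ)) * ENNReal.ofReal (∑ p ∈ P, w p) := by
    rw [← ENNReal.ofReal_mul (by positivity)]
    calc ∑ t ∈ T, Metric.ediam (Metric.closedBall t.1 (12 * (1 / 2 : ℝ) ^ t.2)) ^ (n + σ)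
        ≤ ∑ t ∈ T, ENNReal.ofReal (12 ^ (n + σ) * (2 * (1 / 2 : ℝ) ^ t.2) ^ (n + σ)) := by
          apply Finset.sum_le_sum
          intro t _
          rw [← Real.mul_rpow (by norm_num) (by positivity),
            ← ENNReal.ofReal_rpow_of_nonneg (by positivity) hu]
          apply ENNReal.rpow_le_rpow _ hu
          refine Metric.ediam_le_of_forall_dist_le ?_
          intro x hx y hy
          rw [Metric.mem_closedBall] at hx hy
          linarith [dist_triangle_right x y t.1]
      _ = ENNReal.ofReal (12 ^ (n + σ) * ∑ t ∈ T, (2 * (1 / 2 : ℝ) ^ t.2) ^ (n + σ)) := by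
          rw [Finset.mul_sum, ENNReal.ofReal_sum_of_nonneg]
          intro i _; positivity
      _ ≤ _ := by
          apply ENNReal.ofReal_le_ofReal
          gcongr
  calc a * ∑ t ∈ T, Metric.ediam (Metric.closedBall t.1 (12 * (1 / 2 : ℝ) ^ t.2)) ^ (n + σ)
      ≤ a * (ENNReal.ofReal (12 ^ (n + σ)) * ENNReal.ofReal (∑ p ∈ P, w p)) := by gcongr
    _ = ENNReal.ofReal (12 ^ (n + σ)) * (a * ENNReal.ofReal (∑ p ∈ P, w p)) := by ring
    _ ≤ ENNReal.ofReal (12 ^ (n + σ)) * (ENNReal.ofReal (C * δ ^ σ) * M * μ G) := by gcongr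
    _ = ENNReal.ofReal (12 ^ (n + σ) * C * δ ^ σ) * M * μ G := by
        rw [mul_assoc (12 ^ (n + σ) : ℝ), ENNReal.ofReal_mul (by positivity : (0:ℝ) ≤ 12 ^ (n + σ))]
        ring

open Filter in
open scoped ENNReal Topology in
lemma slp_limsup {X : Type*} [EMetricSpace X] [MeasurableSpace X] [BorelSpace X] (u : ℝ)
    (hu : 0 < u) (A : ℕ → Set X) {τ : ℕ → Type*} [∀ k, Countable (τ k)]
    (U : ∀ k, τ k → Set X) (c : ℕ → ℝ≥0∞) (hc : ∑' k, c k ≠ ⊤)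
    (hcov : ∀ k, A k ⊆ ⋃ i, U k i) (hsum : ∀ k, ∑' i, Metric.ediam (U k i) ^ u ≤ c k) :
    μH[u] {x | ∃ᶠ k in atTop, x ∈ A k} = 0 := by
  have htend := ENNReal.tendsto_sum_nat_add c hc
  have hle : ∀ N, ∑' p : (Σ k : ℕ, τ (k + N)), Metric.ediam (U (p.1 + N) p.2) ^ u ≤
      ∑' k, c (k + N) := by
    intro N
    rw [ENNReal.tsum_sigma (fun k i => Metric.ediam (U (k + N) i) ^ u)]
    exact ENNReal.tsum_le_tsum (fun k => hsum _)
  have h := Measure.hausdorffMeasure_le_liminf_tsum (ι := fun N => Σ k : ℕ, τ (k + N)) u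
    {x | ∃ᶠ k in atTop, x ∈ A k} (l := atTop) (fun N => (∑' k, c (k + N)) ^ (1 / u)) (by
      have := (ENNReal.continuous_rpow_const (y := 1 / u)).tendsto 0 |>.comp htend
      rwa [ENNReal.zero_rpow_of_pos (by positivity)] at this)
    (fun N p => U (p.1 + N) p.2) (by
      refine Eventually.of_forall (fun N p => ?_)
      rw [one_div, ENNReal.le_rpow_inv_iff hu]
      exact (ENNReal.le_tsum p).trans (hle N)) (by
      refine Eventually.of_forall (fun N x hx => ?_)
      obtain ⟨k, hk, hxk⟩ := frequently_atTop.1 hx N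
      obtain ⟨i, hi⟩ := Set.mem_iUnion.1 (hcov k hxk)
      obtain ⟨l, rfl⟩ := Nat.exists_eq_add_of_le' hk
      exact Set.mem_iUnion.2 ⟨⟨l, i⟩, hi⟩)
  refine le_antisymm (h.trans ?_) (zero_le)
  calc liminf (fun N => ∑' p : (Σ k : ℕ, τ (k + N)), Metric.ediam (U (p.1 + N) p.2) ^ u) atTop
      ≤ liminf (fun N => ∑' k, c (k + N)) atTop := liminf_le_liminf (Eventually.of_forall hle)
    _ = 0 := htend.liminf_eq

open Filter in
open scoped ENNReal Topology in
lemma slp_density {X : Type*} [MetricSpace X] [SecondCountableTopology X] [MeasurableSpace X]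
    [BorelSpace X] (μ : Measure X) [IsFiniteMeasure μ] (s' s : ℝ) (hs' : 0 ≤ s') (hss : s' < s) :
    μH[s] {x | ∃ᶠ k : ℕ in atTop, ENNReal.ofReal (((1 / 2 : ℝ) ^ k) ^ s') <
      μ (Metric.closedBall x ((1 / 2 : ℝ) ^ k))} = 0 := by
  set D := {x | ∃ᶠ k : ℕ in atTop, ENNReal.ofReal (((1 / 2 : ℝ) ^ k) ^ s') <
      μ (Metric.closedBall x ((1 / 2 : ℝ) ^ k))} with hD
  refine (Measure.hausdorffMeasure_zero_or_top hss D).resolve_right ?_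
  have key : ∀ N : ℕ, ∃ v : Set (X × ℕ), v.Countable ∧ (∀ p ∈ v, N ≤ p.2) ∧
      (D ⊆ ⋃ p ∈ v, Metric.closedBall p.1 (5 * (1 / 2 : ℝ) ^ p.2)) ∧
      ∑' p : v, ENNReal.ofReal (((1 / 2 : ℝ) ^ p.1.2) ^ s') ≤ μ Set.univ := by
    intro N
    let t : Set (X × ℕ) := {p | N ≤ p.2 ∧ ENNReal.ofReal (((1 / 2 : ℝ) ^ p.2) ^ s') <
      μ (Metric.closedBall p.1 ((1 / 2 : ℝ) ^ p.2))}
    obtain ⟨v, hvt, hdisj, hcov⟩ := Vitali.exists_disjoint_subfamily_covering_enlargement_closedBall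
      t (fun i => i.1) (fun i => (1 / 2 : ℝ) ^ i.2) 1
      (fun a _ => pow_le_one₀ (by norm_num) (by norm_num)) 5 (by norm_num)
    have hvc : v.Countable := by
      apply hdisj.countable_of_nonempty_interior
      intro p _
      refine ⟨p.1, Metric.ball_subset_interior_closedBall (Metric.mem_ball_self (by positivity))⟩
    refine ⟨v, hvc, fun p hp => (hvt hp).1, ?_, ?_⟩
    · intro x hx
      obtain ⟨k, hk, hxk⟩ := frequently_atTop.1 hx N
      obtain ⟨b, hb, hsub⟩ := hcov (x, k) ⟨hk, hxk⟩
      exact Set.mem_biUnion hb (hsub (Metric.mem_closedBall_self (by positivity)))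
    · calc ∑' p : v, ENNReal.ofReal (((1 / 2 : ℝ) ^ p.1.2) ^ s')
          ≤ ∑' p : v, μ (Metric.closedBall p.1.1 ((1 / 2 : ℝ) ^ p.1.2)) :=
            ENNReal.tsum_le_tsum (fun p => (hvt p.2).2.le)
        _ = μ (⋃ p ∈ v, Metric.closedBall p.1 ((1 / 2 : ℝ) ^ p.2)) := by
            rw [measure_biUnion hvc hdisj]
            intro p _
            exact Metric.isClosed_closedBall.measurableSet
        _ ≤ μ Set.univ := measure_mono (Set.subset_univ _)
  choose v hvc hvN hvcov hvsum using key
  have : ∀ N, Countable (v N) := fun N => (hvc N).to_subtype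
  have hdiam : ∀ (x : X) (k : ℕ), Metric.ediam (Metric.closedBall x (5 * (1 / 2 : ℝ) ^ k)) ≤
      ENNReal.ofReal (10 * (1 / 2 : ℝ) ^ k) := by
    intro x k
    refine Metric.ediam_le_of_forall_dist_le ?_
    intro y hy z hz
    rw [Metric.mem_closedBall] at hy hz
    linarith [dist_triangle_right y z x]
  have h := Measure.hausdorffMeasure_le_liminf_tsum (ι := fun N => v N) s'
    D (l := atTop) (fun N => ENNReal.ofReal (10 * (1 / 2 : ℝ) ^ N)) (by
      have h1 : Tendsto (fun N : ℕ => 10 * (1 / 2 : ℝ) ^ N) atTop (𝓝 (10 * 0)) :=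
        (tendsto_pow_atTop_nhds_zero_of_lt_one (by norm_num) (by norm_num)).const_mul _
      have := ENNReal.tendsto_ofReal h1
      simpa using this)
    (fun N p => Metric.closedBall p.1.1 (5 * (1 / 2 : ℝ) ^ p.1.2)) (by
      refine Eventually.of_forall (fun N p => (hdiam _ _).trans ?_)
      apply ENNReal.ofReal_le_ofReal
      have := pow_le_pow_of_le_one (by norm_num : (0 : ℝ) ≤ 1 / 2) (by norm_num) (hvN N p.1 p.2)
      linarith) (by
      refine Eventually.of_forall (fun N x hx => ?_)
      have := hvcov N hx
      simp only [Set.mem_iUnion] at this ⊢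
      obtain ⟨p, hp, hx⟩ := this
      exact ⟨⟨p, hp⟩, hx⟩)
  refine ne_top_of_le_ne_top (b := ENNReal.ofReal (10 ^ s') * μ Set.univ)
    (ENNReal.mul_ne_top ENNReal.ofReal_ne_top (measure_ne_top _ _)) (h.trans ?_)
  calc _ ≤ liminf (fun N : ℕ => ENNReal.ofReal (10 ^ s') * μ Set.univ) atTop := by
        refine liminf_le_liminf (Eventually.of_forall (fun N => ?_))
        refine le_trans ?_ (mul_le_mul_right (hvsum N) _)
        rw [← ENNReal.tsum_mul_left]
        refine ENNReal.tsum_le_tsum (fun p => ?_)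
        rw [← ENNReal.ofReal_mul (by positivity), ← Real.mul_rpow (by norm_num) (by positivity),
          ← ENNReal.ofReal_rpow_of_nonneg (by positivity) hs']
        exact ENNReal.rpow_le_rpow (hdiam _ _) hs'
    _ = _ := by simp

open scoped ENNReal in
lemma slp_energy {X : Type*} [MetricSpace X] [MeasurableSpace X]
    [BorelSpace X] (μ : Measure X) [IsFiniteMeasure μ] (hat : ∀ x, μ {x} = 0)
    (σ s' : ℝ) (hσ : 0 < σ) (hss : σ < s') (m : ℕ) :
    ∃ M : ℝ≥0∞, M ≠ ⊤ ∧ ∀ y, (∀ k, m ≤ k → μ (Metric.closedBall y ((1 / 2 : ℝ) ^ k)) ≤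
      ENNReal.ofReal (((1 / 2 : ℝ) ^ k) ^ s')) →
      ∫⁻ x, (1 + edist x y ^ (-σ)) ∂μ ≤ M := by
  set c : ℕ → ℝ := fun k => ((1 / 2 : ℝ) ^ (k + 1)) ^ (-σ) with hcdef
  have hc0 : ∀ k, 0 ≤ c k := fun k => by positivity
  have hsummable : Summable (fun k : ℕ => c k * ((1 / 2 : ℝ) ^ k) ^ s') := by
    have hq0 : (0 : ℝ) ≤ (1 / 2 : ℝ) ^ (s' - σ) := by positivity
    have hq1 : (1 / 2 : ℝ) ^ (s' - σ) < 1 :=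
      Real.rpow_lt_one (by norm_num) (by norm_num) (by linarith)
    have := (summable_geometric_of_lt_one hq0 hq1).mul_left ((1 / 2 : ℝ) ^ (-σ))
    refine this.congr (fun k => ?_)
    have h2 : (0 : ℝ) < 1 / 2 := by norm_num
    simp only [hcdef]
    rw [← Real.rpow_natCast, ← Real.rpow_natCast, ← Real.rpow_natCast, ← Real.rpow_mul h2.le,
      ← Real.rpow_mul h2.le, ← Real.rpow_mul h2.le, ← Real.rpow_add h2, ← Real.rpow_add h2]
    congr 1
    push_cast
    ring
  refine ⟨(1 + ENNReal.ofReal (((1 / 2 : ℝ) ^ m) ^ (-σ))) * μ Set.univ +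
    ∑' k, ENNReal.ofReal (c k * ((1 / 2 : ℝ) ^ k) ^ s'), ?_, ?_⟩
  · refine ENNReal.add_ne_top.2 ⟨ENNReal.mul_ne_top (by simp) (measure_ne_top _ _), ?_⟩
    exact hsummable.tsum_ofReal_ne_top
  · intro y hy
    have hpt : ∀ x, x ≠ y → 1 + edist x y ^ (-σ) ≤
        (1 + ENNReal.ofReal (((1 / 2 : ℝ) ^ m) ^ (-σ))) +
        ∑' k, Set.indicator (Metric.closedBall y ((1 / 2 : ℝ) ^ k))
          (fun _ => if m ≤ k then ENNReal.ofReal (c k) else 0) x := by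
      intro x hxy
      have hd0 : 0 < dist x y := dist_pos.2 hxy
      rw [edist_dist, ENNReal.ofReal_rpow_of_pos hd0]
      by_cases hd : (1 / 2 : ℝ) ^ m ≤ dist x y
      · refine le_trans ?_ le_self_add
        gcongr 1 + ENNReal.ofReal ?_
        exact Real.rpow_le_rpow_of_nonpos (by positivity) hd (by linarith)
      · push Not at hd
        have hm1 : (1 / 2 : ℝ) ^ m ≤ 1 := pow_le_one₀ (by norm_num) (by norm_num)
        obtain ⟨j, hj1, hj2⟩ := exists_nat_pow_near_of_lt_one (x := dist x y) (y := (1 / 2 : ℝ)) hd0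
          (by linarith) (by norm_num) (by norm_num)
        have hmj : m ≤ j := by
          by_contra hlt
          push Not at hlt
          have := pow_le_pow_of_le_one (by norm_num : (0 : ℝ) ≤ 1 / 2) (by norm_num)
            (Nat.succ_le_of_lt hlt)
          simp only [Nat.succ_eq_add_one] at this
          linarith
        rw [add_assoc]
        gcongr 1 + ?_
        refine le_trans ?_ le_add_self
        refine le_trans ?_ (ENNReal.le_tsum j)
        rw [Set.indicator_of_mem (by simpa using hj2), if_pos hmj]
        apply ENNReal.ofReal_le_ofReal
        exact Real.rpow_le_rpow_of_nonpos (by positivity) hj1.le (by linarith)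
    have hae : ∀ᵐ x ∂μ, x ≠ y := by
      rw [ae_iff]; simpa using hat y
    calc ∫⁻ x, (1 + edist x y ^ (-σ)) ∂μ
        ≤ ∫⁻ x, ((1 + ENNReal.ofReal (((1 / 2 : ℝ) ^ m) ^ (-σ))) +
          ∑' k, Set.indicator (Metric.closedBall y ((1 / 2 : ℝ) ^ k))
          (fun _ => if m ≤ k then ENNReal.ofReal (c k) else 0) x) ∂μ :=
          lintegral_mono_ae (hae.mono (fun x hx => hpt x hx))
      _ = (1 + ENNReal.ofReal (((1 / 2 : ℝ) ^ m) ^ (-σ))) * μ Set.univ +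
          ∑' k, (if m ≤ k then ENNReal.ofReal (c k) else 0) *
            μ (Metric.closedBall y ((1 / 2 : ℝ) ^ k)) := by
          rw [lintegral_add_left measurable_const, lintegral_const, lintegral_tsum]
          · congr 2
            ext k
            rw [lintegral_indicator_const Metric.isClosed_closedBall.measurableSet]
          · intro k
            exact (measurable_const.indicator Metric.isClosed_closedBall.measurableSet).aemeasurable
      _ ≤ _ := by
          gcongr with k
          split_ifs with hk
          · rw [ENNReal.ofReal_mul (hc0 k)]
            gcongr
            exact hy k hk
          · simp

open Filter in
open scoped ENNReal Topology in
lemma slp_mass {n : ℕ} (μ : Measure (EuclideanSpace ℝ (Fin n)))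
    (e : EuclideanSpace ℝ (Fin n)) (t : ℝ) (ht : 0 < t)
    (hae : ∀ᵐ y ∂μ, ∀ᶠ k : ℕ in atTop, μ {x | |⟪x - y, e⟫| ≤ (1 / 2 : ℝ) ^ k} ≤
      ENNReal.ofReal (((1 / 2 : ℝ) ^ k) ^ t))
    (F : Set (EuclideanSpace ℝ (Fin n))) (hF : μ F ≠ 0) :
    μH[t] ((fun x => ⟪x, e⟫) '' F) ≠ 0 := by
  let Fm : ℕ → Set (EuclideanSpace ℝ (Fin n)) := fun m => {y ∈ F | ∀ k, m ≤ k →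
    μ {x | |⟪x - y, e⟫| ≤ (1 / 2 : ℝ) ^ k} ≤ ENNReal.ofReal (((1 / 2 : ℝ) ^ k) ^ t)}
  obtain ⟨m, hm⟩ : ∃ m, μ (Fm m) ≠ 0 := by
    by_contra! h
    apply hF
    have h1 : μ (⋃ m, Fm m) = 0 := measure_iUnion_null h
    rw [ae_iff] at hae
    refine measure_mono_null ?_ (measure_union_null hae h1)
    intro y hy
    by_cases hyy : ∀ᶠ k : ℕ in atTop, μ {x | |⟪x - y, e⟫| ≤ (1 / 2 : ℝ) ^ k} ≤
      ENNReal.ofReal (((1 / 2 : ℝ) ^ k) ^ t)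
    · obtain ⟨m, hm⟩ := eventually_atTop.1 hyy
      exact Or.inr (Set.mem_iUnion.2 ⟨m, hy, hm⟩)
    · exact Or.inl hyy
  have hPm : Measurable (fun x : EuclideanSpace ℝ (Fin n) => ⟪x, e⟫) := by fun_prop
  set ν : Measure ℝ := (μ.restrict (Fm m)).map (fun x => ⟪x, e⟫) with hν
  have hstrip : ∀ U : Set ℝ, ∀ k, m ≤ k → Metric.ediam U ≤ ENNReal.ofReal ((1 / 2 : ℝ) ^ k) →
      ν U ≤ ENNReal.ofReal (((1 / 2 : ℝ) ^ k) ^ t) := by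
    intro U k hk hU
    refine (measure_mono subset_closure).trans ?_
    rw [hν, Measure.map_apply hPm isClosed_closure.measurableSet,
      Measure.restrict_apply (hPm isClosed_closure.measurableSet)]
    rcases Set.eq_empty_or_nonempty ((fun x => ⟪x, e⟫) ⁻¹' closure U ∩ Fm m) with h | ⟨y, hy, hyF⟩
    · rw [h]; simp
    · refine (measure_mono ?_).trans (hyF.2 k hk)
      rintro x ⟨hx, -⟩
      have h1 := Metric.edist_le_ediam_of_mem (Set.mem_preimage.1 hx) (Set.mem_preimage.1 hy)
      rw [Metric.ediam_closure] at h1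
      have h2 := h1.trans hU
      rw [edist_dist, ENNReal.ofReal_le_ofReal_iff (by positivity), Real.dist_eq,
        ← inner_sub_left] at h2
      exact h2
  have hle : ν ≤ ENNReal.ofReal (2 ^ t) • (μH[t] : Measure ℝ) := by
    have h0 : ENNReal.ofReal (2 ^ t) ≠ 0 := by
      rw [Ne, ENNReal.ofReal_eq_zero, not_le]; positivity
    have hmain : (ENNReal.ofReal (2 ^ t))⁻¹ • ν ≤ (μH[t] : Measure ℝ) := by
      apply Measure.le_hausdorffMeasure t _ (ENNReal.ofReal ((1 / 2 : ℝ) ^ m))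
        (by rw [ENNReal.ofReal_pos]; positivity)
      intro U hU
      rw [Measure.smul_apply, smul_eq_mul, mul_comm, ← div_eq_mul_inv]
      refine ENNReal.div_le_of_le_mul ?_
      by_cases hd : Metric.ediam U = 0
      · rw [hd, ENNReal.zero_rpow_of_pos ht, zero_mul]
        have hlim : Tendsto (fun k : ℕ => ENNReal.ofReal (((1 / 2 : ℝ) ^ k) ^ t)) atTop (𝓝 0) := by
          have h1 : Tendsto (fun N : ℕ => (1 / 2 : ℝ) ^ N) atTop (𝓝 0) :=
            tendsto_pow_atTop_nhds_zero_of_lt_one (by norm_num) (by norm_num)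
          have h2 := h1.rpow_const (p := t) (Or.inr ht.le)
          rw [Real.zero_rpow ht.ne'] at h2
          simpa using ENNReal.tendsto_ofReal h2
        refine ge_of_tendsto hlim ?_
        filter_upwards [eventually_ge_atTop m] with k hk
        exact hstrip U k hk (by rw [hd]; exact zero_le)
      · have hfin : Metric.ediam U ≠ ⊤ := ne_top_of_le_ne_top ENNReal.ofReal_ne_top hU
        set d := (Metric.ediam U).toReal with hdd
        have hd0 : 0 < d := ENNReal.toReal_pos hd hfin
        have hdU : Metric.ediam U = ENNReal.ofReal d := (ENNReal.ofReal_toReal hfin).symm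
        rw [hdU, ENNReal.ofReal_le_ofReal_iff (by positivity)] at hU
        have hm1 : (1 / 2 : ℝ) ^ m ≤ 1 := pow_le_one₀ (by norm_num) (by norm_num)
        obtain ⟨j, hj1, hj2⟩ := exists_nat_pow_near_of_lt_one (x := d) (y := (1 / 2 : ℝ)) hd0
          (by linarith) (by norm_num) (by norm_num)
        have hmj : m ≤ j := by
          by_contra hlt
          push Not at hlt
          have := pow_le_pow_of_le_one (by norm_num : (0 : ℝ) ≤ 1 / 2) (by norm_num)
            (Nat.succ_le_of_lt hlt)
          simp only [Nat.succ_eq_add_one] at this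
          linarith
        refine (hstrip U j hmj (by rw [hdU]; exact ENNReal.ofReal_le_ofReal hj2)).trans ?_
        rw [hdU, ENNReal.ofReal_rpow_of_pos hd0, ← ENNReal.ofReal_mul (by positivity),
          ← Real.mul_rpow hd0.le (by norm_num)]
        apply ENNReal.ofReal_le_ofReal
        apply Real.rpow_le_rpow (by positivity) _ ht.le
        rw [pow_succ] at hj1
        linarith
    intro U
    have := hmain U
    rw [Measure.smul_apply, smul_eq_mul] at this ⊢
    rw [ENNReal.inv_mul_le_iff h0 ENNReal.ofReal_ne_top] at this
    exact this
  intro hzero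
  apply hm
  have h1 := hle ((fun x => ⟪x, e⟫) '' F)
  rw [Measure.smul_apply, hzero, smul_zero] at h1
  have h2 : μ (Fm m) ≤ ν ((fun x => ⟪x, e⟫) '' F) := by
    calc μ (Fm m) ≤ μ (((fun x => ⟪x, e⟫) ⁻¹' ((fun x => ⟪x, e⟫) '' F)) ∩ Fm m) := by
          apply measure_mono
          intro y hy
          exact ⟨Set.mem_image_of_mem _ hy.1, hy⟩
      _ ≤ μ.restrict (Fm m) ((fun x => ⟪x, e⟫) ⁻¹' ((fun x => ⟪x, e⟫) '' F)) :=
          Measure.le_restrict_apply _ _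
      _ ≤ _ := Measure.le_map_apply hPm.aemeasurable _
  exact le_antisymm (h2.trans h1) (zero_le)

open Filter in
open scoped ENNReal Topology in
lemma slp_summable (a : ℝ) (ha : 0 < a) : Summable (fun k : ℕ => ((1 / 2 : ℝ) ^ k) ^ a) := by
  have hq1 : (1 / 2 : ℝ) ^ a < 1 := Real.rpow_lt_one (by norm_num) (by norm_num) ha
  refine (summable_geometric_of_lt_one (by positivity) hq1).congr (fun k => ?_)
  rw [← Real.rpow_natCast, ← Real.rpow_natCast, ← Real.rpow_mul (by norm_num),
    ← Real.rpow_mul (by norm_num), mul_comm]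

open Filter in
open scoped ENNReal Topology in
lemma slp_ae {X : Type*} [MeasurableSpace X] (μ : Measure X) (f : ℕ → X → ℝ≥0∞)
    (hf : ∀ k, Measurable (f k)) (t t' : ℝ) (htt : t < t')
    (h : ∀ᶠ k : ℕ in atTop, ∫⁻ y, f k y ∂μ ≤ ENNReal.ofReal (((1 / 2 : ℝ) ^ k) ^ t')) :
    ∀ᵐ y ∂μ, ∀ᶠ k : ℕ in atTop, f k y ≤ ENNReal.ofReal (((1 / 2 : ℝ) ^ k) ^ t) := by
  obtain ⟨K, hK⟩ := eventually_atTop.1 h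
  have hb : ∀ k, μ {y | ENNReal.ofReal (((1 / 2 : ℝ) ^ (k + K)) ^ t) ≤ f (k + K) y} ≤
      ENNReal.ofReal (((1 / 2 : ℝ) ^ (k + K)) ^ (t' - t)) := by
    intro k
    have hpos : (0 : ℝ) < (1 / 2 : ℝ) ^ (k + K) := by positivity
    have h1 := meas_ge_le_lintegral_div (hf (k + K)).aemeasurable (μ := μ)
      (ε := ENNReal.ofReal (((1 / 2 : ℝ) ^ (k + K)) ^ t))
      (by rw [Ne, ENNReal.ofReal_eq_zero, not_le]; positivity) ENNReal.ofReal_ne_top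
    refine h1.trans ?_
    rw [Real.rpow_sub hpos, ENNReal.ofReal_div_of_pos (by positivity)]
    gcongr
    exact hK _ (by omega)
  have hsum : ∑' k, μ {y | ENNReal.ofReal (((1 / 2 : ℝ) ^ (k + K)) ^ t) ≤ f (k + K) y} ≠ ⊤ := by
    refine ne_top_of_le_ne_top ?_ (ENNReal.tsum_le_tsum hb)
    have := (slp_summable (t' - t) (by linarith))
    exact ((summable_nat_add_iff K).2 this).tsum_ofReal_ne_top
  filter_upwards [ae_eventually_notMem hsum] with y hy
  obtain ⟨N, hN⟩ := eventually_atTop.1 hy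
  refine eventually_atTop.2 ⟨N + K, fun k hk => ?_⟩
  have := hN (k - K) (by omega)
  rw [show k - K + K = k by omega] at this
  exact (not_le.1 this).le

open Filter in
open scoped ENNReal Topology in
lemma slp_eps {n : ℕ} (μ : Measure (EuclideanSpace ℝ (Fin (n + 2)))) [IsFiniteMeasure μ]
    (hat : ∀ x, μ {x} = 0) (t t' σ s' : ℝ) (ht : 0 < t) (htt : t < t') (htσ : t' < σ) (hσs : σ < s')
    (hdens : μ {x | ∃ᶠ k : ℕ in atTop, ENNReal.ofReal (((1 / 2 : ℝ) ^ k) ^ s') <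
      μ (Metric.closedBall x ((1 / 2 : ℝ) ^ k))} = 0) :
    ∃ X : Set (EuclideanSpace ℝ (Fin (n + 2))),
      X ⊆ Metric.sphere (0 : EuclideanSpace ℝ (Fin (n + 2))) 1 ∧ μH[n + σ] X = 0 ∧
      ∀ e ∈ Metric.sphere (0 : EuclideanSpace ℝ (Fin (n + 2))) 1, e ∉ X →
        ∀ F : Set (EuclideanSpace ℝ (Fin (n + 2))), μ F ≠ 0 →
          μH[t] ((fun x => ⟪x, e⟫) '' F) ≠ 0 := by
  have hσ : 0 < σ := by linarith
  let G : ℕ → Set (EuclideanSpace ℝ (Fin (n + 2))) := fun m => {y | ∀ k, m ≤ k →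
    μ (Metric.closedBall y ((1 / 2 : ℝ) ^ k)) ≤ ENNReal.ofReal (((1 / 2 : ℝ) ^ k) ^ s')}
  let A : ℕ → ℕ → Set (EuclideanSpace ℝ (Fin (n + 2))) := fun m k => {e | ‖e‖ = 1 ∧
    ENNReal.ofReal (((1 / 2 : ℝ) ^ k) ^ t') <
      ∫⁻ y in G m, μ {x | |⟪x - y, e⟫| ≤ (1 / 2 : ℝ) ^ k} ∂μ}
  obtain ⟨C, hC0, hC⟩ := slp_content n σ hσ
  refine ⟨⋃ m, {e | ∃ᶠ k in atTop, e ∈ A m k}, ?_, ?_, ?_⟩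
  · intro e he
    obtain ⟨m, hm⟩ := Set.mem_iUnion.1 he
    obtain ⟨k, hk⟩ := hm.exists
    simpa using hk.1
  · rw [measure_iUnion_null_iff]
    intro m
    obtain ⟨M, hM, hMG⟩ := slp_energy μ hat σ s' hσ hσs m
    have key := fun k => hC μ (G m) M (fun y hy => hMG y hy) k
      (ENNReal.ofReal (((1 / 2 : ℝ) ^ k) ^ t')) (A m k) (fun e he => he.1) (fun e he => he.2.le)
    choose T hTcov hTsum using key
    refine slp_limsup (n + σ) (by positivity) (A m) (τ := fun k => T k)
      (fun k p => Metric.closedBall p.1.1 (12 * (1 / 2 : ℝ) ^ p.1.2))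
      (fun k => ENNReal.ofReal (((1 / 2 : ℝ) ^ k) ^ (σ - t')) * (ENNReal.ofReal C * M * μ (G m)))
      ?_ ?_ ?_
    · rw [ENNReal.tsum_mul_right]
      exact ENNReal.mul_ne_top (slp_summable _ (by linarith)).tsum_ofReal_ne_top
        (ENNReal.mul_ne_top (ENNReal.mul_ne_top ENNReal.ofReal_ne_top hM) (measure_ne_top _ _))
    · intro k e he
      have := hTcov k he
      simp only [Set.mem_iUnion] at this ⊢
      obtain ⟨p, hp, h⟩ := this
      exact ⟨⟨p, hp⟩, h⟩
    · intro k
      have h1 := hTsum k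
      have hpos : (0 : ℝ) < (1 / 2 : ℝ) ^ k := by positivity
      rw [Finset.tsum_subtype (T k)
        (fun p => Metric.ediam (Metric.closedBall p.1 (12 * (1 / 2 : ℝ) ^ p.2)) ^ (n + σ))]
      rw [mul_comm, ← ENNReal.le_div_iff_mul_le
        (Or.inl (by rw [Ne, ENNReal.ofReal_eq_zero, not_le]; positivity))
        (Or.inl ENNReal.ofReal_ne_top)] at h1
      refine h1.trans (le_of_eq ?_)
      rw [Real.rpow_sub hpos, ENNReal.ofReal_div_of_pos (by positivity),
        ENNReal.ofReal_mul hC0.le]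
      simp only [div_eq_mul_inv]
      ring
  · intro e he heX F hF
    have he1 : ‖e‖ = 1 := by simpa using he
    refine slp_mass μ e t ht ?_ F hF
    have hmeas : ∀ k : ℕ, Measurable
        (fun y => μ {x : EuclideanSpace ℝ (Fin (n + 2)) | |⟪x - y, e⟫| ≤ (1 / 2 : ℝ) ^ k}) := by
      intro k
      have : MeasurableSet
        {q : EuclideanSpace ℝ (Fin (n + 2)) × EuclideanSpace ℝ (Fin (n + 2)) |
          |⟪q.2 - q.1, e⟫| ≤ (1 / 2 : ℝ) ^ k} := by
        apply IsClosed.measurableSet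
        apply isClosed_le _ continuous_const
        fun_prop
      exact measurable_measure_prodMk_left this
    have hGmeas : ∀ m, MeasurableSet (G m) := by
      intro m
      have : G m = ⋂ k, ⋂ (_ : m ≤ k), {y | μ (Metric.closedBall y ((1 / 2 : ℝ) ^ k)) ≤
          ENNReal.ofReal (((1 / 2 : ℝ) ^ k) ^ s')} := by
        ext y; simp [G]
      rw [this]
      refine MeasurableSet.iInter (fun k => MeasurableSet.iInter (fun _ => ?_))
      refine measurableSet_le ?_ measurable_const
      have : MeasurableSet
        {q : EuclideanSpace ℝ (Fin (n + 2)) × EuclideanSpace ℝ (Fin (n + 2)) |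
          dist q.2 q.1 ≤ (1 / 2 : ℝ) ^ k} := by
        apply IsClosed.measurableSet
        apply isClosed_le _ continuous_const
        fun_prop
      exact measurable_measure_prodMk_left this
    have hG : ∀ m, ∀ᵐ y ∂μ, y ∈ G m → ∀ᶠ k : ℕ in atTop,
        μ {x | |⟪x - y, e⟫| ≤ (1 / 2 : ℝ) ^ k} ≤ ENNReal.ofReal (((1 / 2 : ℝ) ^ k) ^ t) := by
      intro m
      rw [← ae_restrict_iff' (hGmeas m)]
      refine slp_ae (μ.restrict (G m)) _ hmeas t t' htt ?_
      have h1 : ¬ ∃ᶠ k in atTop, e ∈ A m k := fun h => heX (Set.mem_iUnion.2 ⟨m, h⟩)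
      rw [not_frequently] at h1
      filter_upwards [h1] with k hk
      by_contra hlt
      exact hk ⟨he1, not_le.1 hlt⟩
    have hd : ∀ᵐ y ∂μ, ¬ ∃ᶠ k : ℕ in atTop, ENNReal.ofReal (((1 / 2 : ℝ) ^ k) ^ s') <
      μ (Metric.closedBall y ((1 / 2 : ℝ) ^ k)) := by
      rw [ae_iff]
      simp only [not_not]
      exact hdens
    filter_upwards [ae_all_iff.2 hG, hd] with y hy hyd
    rw [not_frequently] at hyd
    obtain ⟨m, hm⟩ := eventually_atTop.1 hyd
    exact hy m (fun k hk => not_lt.1 (hm k hk))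

/-- **Strong projection theorem with exceptional-set dimension bound, case `m = 1`, `s ≤ 1`.**
If `E ⊆ ℝⁿ` is `𝓗ˢ`-measurable with `0 < 𝓗ˢ(E) < ∞` where `0 < s = dim_H E ≤ 1`, then there
is a set `X` of unit vectors with `dim_H X ≤ (n−2) + s` such that for every unit vector
`e ∉ X` and every `𝓗ˢ`-measurable `F ⊆ E` with `𝓗ˢ(F) > 0`, the set `{⟨x,e⟩ : x ∈ F}` has
Hausdorff dimension `s`. -/
theorem strong_line_projection_dimension (n : ℕ) (hn : 2 ≤ n) (s : ℝ)
    (hs0 : 0 < s) (hs1 : s ≤ 1) (E : Set (EuclideanSpace ℝ (Fin n)))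
    (hdimE : dimH E = ENNReal.ofReal s)
    (hE : NullMeasurableSet E μH[s])
    (hE0 : 0 < μH[s] E) (hEfin : μH[s] E < ⊤) :
    ∃ X : Set (EuclideanSpace ℝ (Fin n)),
      X ⊆ Metric.sphere (0 : EuclideanSpace ℝ (Fin n)) 1 ∧
      dimH X ≤ ((n - 2 : ℕ) : ENNReal) + ENNReal.ofReal s ∧
      ∀ e ∈ Metric.sphere (0 : EuclideanSpace ℝ (Fin n)) 1, e ∉ X →
        ∀ F : Set (EuclideanSpace ℝ (Fin n)), F ⊆ E →
          NullMeasurableSet F μH[s] → 0 < μH[s] F →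
          dimH ((fun x => ⟪x, e⟫) '' F) = ENNReal.ofReal s := by
  obtain ⟨n, rfl⟩ := Nat.exists_eq_add_of_le' hn
  set μ : Measure (EuclideanSpace ℝ (Fin (n + 2))) := (μH[s]).restrict E with hμ
  have hfin : IsFiniteMeasure μ := ⟨by rw [hμ, Measure.restrict_apply_univ]; exact hEfin⟩
  have hμle : μ ≤ μH[s] := Measure.restrict_le_self
  have hat : ∀ x, μ {x} = 0 := by
    intro x
    have := Measure.nullSingletonClass_hausdorff (EuclideanSpace ℝ (Fin (n + 2))) hs0
    exact le_antisymm ((hμle {x}).trans (by simp)) zero_le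
  let ε : ℕ → ℝ := fun j => s / (4 * (j + 2))
  have hε0 : ∀ j, 0 < ε j := fun j => by positivity
  have hε1 : ∀ j, 4 * ε j < s := by
    intro j
    have : 4 * ε j = s / (j + 2) := by
      simp only [ε]
      field_simp
    rw [this, div_lt_iff₀ (by positivity)]
    have : (0 : ℝ) ≤ j := by positivity
    nlinarith
  have key := fun j => slp_eps μ hat (s - 4 * ε j) (s - 3 * ε j) (s - 2 * ε j) (s - ε j)
    (by linarith [hε1 j]) (by linarith [hε0 j]) (by linarith [hε0 j]) (by linarith [hε0 j])
    (by
      refine le_antisymm ((hμle _).trans (le_of_eq ?_)) zero_le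
      exact slp_density μ (s - ε j) s (by linarith [hε0 j, hε1 j]) (by linarith [hε0 j]))
  choose X hXs hX0 hXe using key
  refine ⟨⋃ j, X j, Set.iUnion_subset hXs, ?_, ?_⟩
  · rw [dimH_iUnion]
    refine iSup_le (fun j => ?_)
    have hnn : 0 ≤ (n : ℝ) + (s - 2 * ε j) := by
      have := hε0 j
      have := hε1 j
      have : (0 : ℝ) ≤ n := by positivity
      linarith
    have h1 : dimH (X j) ≤ ENNReal.ofReal ((n : ℝ) + (s - 2 * ε j)) := by
      apply dimH_le_of_hausdorffMeasure_ne_top (d := Real.toNNReal ((n : ℝ) + (s - 2 * ε j)))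
      rw [Real.coe_toNNReal _ hnn, hX0 j]
      exact ENNReal.zero_ne_top
    refine h1.trans ?_
    rw [Nat.add_sub_cancel, ← ENNReal.ofReal_natCast,
      ← ENNReal.ofReal_add (by positivity) hs0.le]
    apply ENNReal.ofReal_le_ofReal
    linarith [hε0 j]
  · intro e he heX F hFE _ hF0
    have he1 : ‖e‖ = 1 := by simpa using he
    apply le_antisymm
    · have hlip : LipschitzWith 1 (fun x : EuclideanSpace ℝ (Fin (n + 2)) => ⟪x, e⟫) := by
        refine LipschitzWith.of_dist_le_mul (fun x y => ?_)
        rw [Real.dist_eq, ← inner_sub_left, dist_eq_norm]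
        simpa [he1] using abs_real_inner_le_norm (x - y) e
      exact (hlip.dimH_image_le F).trans ((dimH_mono hFE).trans hdimE.le)
    · have hμF : μ F ≠ 0 := by
        rw [hμ, Measure.restrict_apply₀' hE, Set.inter_eq_left.2 hFE]
        exact hF0.ne'
      have hj : ∀ j, ENNReal.ofReal (s - 4 * ε j) ≤ dimH ((fun x => ⟪x, e⟫) '' F) := by
        intro j
        have hnn : 0 ≤ s - 4 * ε j := by linarith [hε1 j]
        apply le_dimH_of_hausdorffMeasure_ne_zero (d := Real.toNNReal (s - 4 * ε j))
        rw [Real.coe_toNNReal _ hnn]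
        exact hXe j e he (fun h => heX (Set.mem_iUnion.2 ⟨j, h⟩)) F hμF
      refine le_of_tendsto' (x := Filter.atTop) (ENNReal.tendsto_ofReal ?_) hj
      have h1 : Filter.Tendsto (fun j : ℕ => s - 4 * ε j) Filter.atTop (nhds (s - 0)) := by
        refine tendsto_const_nhds.sub ?_
        have h2 : (fun j : ℕ => 4 * ε j) = fun j : ℕ => s / ((j + 2 : ℕ) : ℝ) := by
          ext j
          simp only [ε]
          push_cast
          field_simp
        rw [h2]
        exact (Filter.tendsto_add_atTop_iff_nat 2).2 (tendsto_const_div_atTop_nhds_zero_nat s)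
      simpa using h1
end

section
/- Let n ≥ 2 and let E ⊂ ℝⁿ be an 𝓗ˢ-measurable set with 0 < 𝓗ˢ(E) < ∞, where s = dim_H E > 1. Then there exists a set X ⊂ S^{n−1} of unit vectors with dim_H X ≤ n − s such that for every unit vector e ∈ S^{n−1} \ X and every 𝓗ˢ-measurable set F ⊂ E with 𝓗ˢ(F) > 0, the set {⟨x, e⟩ : x ∈ F} ⊂ ℝ has positive one-dimensional Lebesgue measure. -/
open MeasureTheory RealInnerProductSpace

section Helpers
open scoped ENNReal NNReal Topology

abbrev VV (n : ℕ) := EuclideanSpace ℝ (Fin n)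

lemma ediam_cball {n : ℕ} (x : VV n) {r : ℝ} (hr : 0 ≤ r) :
    Metric.ediam (Metric.closedBall x r) ≤ ENNReal.ofReal (2 * r) := by
  rw [← Metric.closedEBall_ofReal hr, ENNReal.ofReal_mul (by norm_num)]
  simpa using Metric.ediam_closedEBall_le (x := x) (r := ENNReal.ofReal r)

/-- the points of good density at level `j` -/
def goodSet {n : ℕ} (μ : Measure (VV n)) (s : ℝ) (j : ℕ) : Set (VV n) :=
  {x | ∀ r : ℝ, 0 < r → r < 1 / ((j : ℝ) + 1) →
    μ (Metric.ball x r) ≤ ENNReal.ofReal (((j : ℝ) + 1) * r ^ s)}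

lemma isClosed_goodSet {n : ℕ} (μ : Measure (VV n)) (s : ℝ) (j : ℕ) :
    IsClosed (goodSet μ s j) := by
  rw [← isOpen_compl_iff, Metric.isOpen_iff]
  intro x hx
  simp only [goodSet, Set.mem_compl_iff, Set.mem_ofPred_eq, not_forall, not_le] at hx
  obtain ⟨r, hr0, hr1, hr⟩ := hx
  have hU : Metric.ball x r = ⋃ k : ℕ, Metric.ball x (r - 1 / ((k : ℝ) + 1)) := by
    ext y
    simp only [Metric.mem_ball, Set.mem_iUnion]
    constructor
    · intro h
      obtain ⟨k, hk⟩ := exists_nat_one_div_lt (sub_pos.2 h)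
      exact ⟨k, by linarith⟩
    · rintro ⟨k, hk⟩
      have : 0 < 1 / ((k : ℝ) + 1) := by positivity
      linarith
  have hmono : Monotone fun k : ℕ => Metric.ball x (r - 1 / ((k : ℝ) + 1)) := by
    intro a b hab
    apply Metric.ball_subset_ball
    have : 1 / ((b : ℝ) + 1) ≤ 1 / ((a : ℝ) + 1) := by
      apply one_div_le_one_div_of_le (by positivity)
      have : (a : ℝ) ≤ b := by exact_mod_cast hab
      linarith
    linarith
  rw [hU, hmono.measure_iUnion, lt_iSup_iff] at hr
  obtain ⟨k, hk⟩ := hr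
  refine ⟨1 / ((k : ℝ) + 1), by positivity, fun y hy => ?_⟩
  simp only [goodSet, Set.mem_compl_iff, Set.mem_ofPred_eq, not_forall, not_le]
  refine ⟨r, hr0, hr1, hk.trans_le (measure_mono ?_)⟩
  apply Metric.ball_subset_ball'
  rw [Metric.mem_ball, dist_comm] at hy
  linarith

lemma hausdorff_bad_null {n : ℕ} (μ : Measure (VV n)) [IsFiniteMeasure μ] (s : ℝ) (hs : 0 < s) :
    μH[s] (⋃ j, goodSet μ s j)ᶜ = 0 := by
  set D := (⋃ j, goodSet μ s j)ᶜ with hD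
  have hDj : ∀ j : ℕ, ∀ x : D, ∃ r : ℝ, 0 < r ∧ r < 1 / ((j : ℝ) + 1) ∧
      ENNReal.ofReal (((j : ℝ) + 1) * r ^ s) < μ (Metric.ball (x : VV n) r) := by
    rintro j ⟨x, hx⟩
    simp only [hD, goodSet, Set.mem_compl_iff, Set.mem_iUnion, Set.mem_ofPred_eq, not_exists,
      not_forall, not_le] at hx
    obtain ⟨r, h1, h2, h3⟩ := hx j
    exact ⟨r, h1, h2, h3⟩
  choose r hr0 hr1 hr using hDj
  have hV := fun j : ℕ => Vitali.exists_disjoint_subfamily_covering_enlargement_closedBall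
    (Set.univ : Set D) (fun x => (x : VV n)) (r j) (1 / ((j : ℝ) + 1))
    (fun a _ => (hr1 j a).le) 5 (by norm_num)
  choose u _ hdis hcov using hV
  have hcount : ∀ j, (u j).Countable := by
    intro j
    apply Set.PairwiseDisjoint.countable_of_nonempty_interior (hdis j)
    intro a _
    exact ⟨a, Metric.ball_subset_interior_closedBall (Metric.mem_ball_self (hr0 j a))⟩
  have : ∀ j, Countable (u j) := fun j => (hcount j).to_subtype
  have key := Measure.hausdorffMeasure_le_liminf_tsum (ι := fun j : ℕ => u j) s D (l := Filter.atTop)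
    (fun j : ℕ => ENNReal.ofReal (10 * (1 / ((j : ℝ) + 1))))
    (by
      have := (tendsto_one_div_add_atTop_nhds_zero_nat (𝕜 := ℝ)).const_mul 10
      rw [mul_zero] at this
      simpa using ENNReal.tendsto_ofReal this)
    (fun j a => Metric.closedBall ((a : D) : VV n) (5 * r j a))
    (Filter.Eventually.of_forall fun j a => by
      refine (ediam_cball _ (by linarith [hr0 j a])).trans ?_
      apply ENNReal.ofReal_le_ofReal
      linarith [hr1 j a])
    (Filter.Eventually.of_forall fun j x hx => by
      obtain ⟨b, hb, hsub⟩ := hcov j ⟨x, hx⟩ (Set.mem_univ _)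
      exact Set.mem_iUnion.2 ⟨⟨b, hb⟩, hsub (Metric.mem_closedBall_self (hr0 j _).le)⟩)
  have hsum : ∀ j : ℕ, ∑' a : u j, Metric.ediam (Metric.closedBall ((a : D) : VV n) (5 * r j a)) ^ s
      ≤ ENNReal.ofReal (10 ^ s * (1 / ((j : ℝ) + 1))) * μ Set.univ := by
    intro j
    have h1 : ∀ a : u j, Metric.ediam (Metric.closedBall ((a : D) : VV n) (5 * r j a)) ^ s ≤
        ENNReal.ofReal (10 ^ s * (1 / ((j : ℝ) + 1))) *
          μ (Metric.closedBall ((a : D) : VV n) (r j a)) := by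
      intro a
      have h2 : Metric.ediam (Metric.closedBall ((a : D) : VV n) (5 * r j a)) ≤
          ENNReal.ofReal (10 * r j a) := by
        refine (ediam_cball _ (by linarith [hr0 j a])).trans ?_
        apply ENNReal.ofReal_le_ofReal
        linarith
      calc _ ≤ ENNReal.ofReal (10 * r j a) ^ s := ENNReal.rpow_le_rpow h2 hs.le
        _ = ENNReal.ofReal (10 ^ s * (1 / ((j : ℝ) + 1))) *
            ENNReal.ofReal (((j : ℝ) + 1) * (r j a) ^ s) := by
          rw [ENNReal.ofReal_rpow_of_nonneg (by linarith [hr0 j a]) hs.le,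
            ← ENNReal.ofReal_mul (by positivity), Real.mul_rpow (by norm_num) (hr0 j a).le]
          congr 1
          field_simp
        _ ≤ _ := by
          gcongr
          exact (hr j a).le.trans (measure_mono Metric.ball_subset_closedBall)
    calc _ ≤ ∑' a : u j, ENNReal.ofReal (10 ^ s * (1 / ((j : ℝ) + 1))) *
          μ (Metric.closedBall ((a : D) : VV n) (r j a)) := ENNReal.tsum_le_tsum h1
      _ = ENNReal.ofReal (10 ^ s * (1 / ((j : ℝ) + 1))) *
          ∑' a : u j, μ (Metric.closedBall ((a : D) : VV n) (r j a)) := ENNReal.tsum_mul_left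
      _ ≤ _ := by
        gcongr
        rw [← measure_biUnion (hcount j) (hdis j) (fun a _ => Metric.isClosed_closedBall.measurableSet)]
        exact measure_mono (Set.subset_univ _)
  have hlim : Filter.Tendsto (fun j : ℕ => ENNReal.ofReal (10 ^ s * (1 / ((j : ℝ) + 1))) * μ Set.univ)
      Filter.atTop (𝓝 0) := by
    have := (tendsto_one_div_add_atTop_nhds_zero_nat (𝕜 := ℝ)).const_mul (10 ^ s)
    rw [mul_zero] at this
    have := ENNReal.Tendsto.mul_const (b := μ Set.univ) (ENNReal.tendsto_ofReal this)
      (Or.inr (measure_ne_top _ _))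
    simpa using this
  refine le_antisymm (key.trans ?_) zero_le
  rw [← hlim.liminf_eq]
  exact Filter.liminf_le_liminf (Filter.Eventually.of_forall hsum)

/-- the standard character `t ↦ exp (2 π i t)` -/
noncomputable def ef (t : ℝ) : ℂ := Complex.exp (((2 * Real.pi * t : ℝ) : ℂ) * Complex.I)

@[simp] lemma norm_ef (t : ℝ) : ‖ef t‖ = 1 := Complex.norm_exp_ofReal_mul_I _

@[fun_prop] lemma continuous_ef : Continuous ef := by unfold ef; fun_prop

lemma ef_add (a b : ℝ) : ef (a + b) = ef a * ef b := by
  unfold ef; rw [← Complex.exp_add]; congr 1; push_cast; ring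

lemma ef_re (t : ℝ) : (ef t).re = Real.cos (2 * Real.pi * t) := by
  unfold ef; rw [Complex.exp_ofReal_mul_I_re]

open scoped FourierTransform SchwartzMap in
lemma schwartz_pairing {n : ℕ} (ν : Measure (VV n)) [IsFiniteMeasure ν] (e : VV n) (h : VV n → ℂ)
    (hc : Continuous h) (M : ℝ) (hM : ∀ x, ‖h x‖ ≤ M) (f : 𝓢(ℝ, ℂ)) :
    ‖∫ x, f ⟪x, e⟫ * h x ∂ν‖ₑ ≤ (∫⁻ r : ℝ, ‖f r‖ₑ ^ 2) ^ (1 / 2 : ℝ) *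
      (∫⁻ r : ℝ, ‖∫ x, h x * ef (r * ⟪x, e⟫) ∂ν‖ₑ ^ 2) ^ (1 / 2 : ℝ) := by
  have hinv : ∀ u : ℝ, f u = ∫ r : ℝ, (𝓕 f) r * ef (r * u) := by
    intro u
    have h1 : 𝓕⁻ (𝓕 f) = f := FourierPair.fourierInv_fourier_eq f
    have h2 : (𝓕⁻ (𝓕 f)) u = f u := by rw [h1]
    rw [← h2, SchwartzMap.fourierInv_coe, Real.fourierInv_eq']
    congr 1
    ext r
    simp only [ef, smul_eq_mul]
    rw [mul_comm]
    congr 3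
    simp only [RCLike.inner_apply, conj_trivial]
    push_cast
    ring
  have hHc : Continuous fun r : ℝ => ∫ x, h x * ef (r * ⟪x, e⟫) ∂ν := by
    apply continuous_of_dominated (bound := fun _ => M)
    · intro r
      exact (by fun_prop : Continuous fun x => h x * ef (r * ⟪x, e⟫)).aestronglyMeasurable
    · intro r
      exact Filter.Eventually.of_forall fun x => by simpa using hM x
    · exact integrable_const _
    · exact Filter.Eventually.of_forall fun x => by fun_prop
  have hswap : ∫ x, f ⟪x, e⟫ * h x ∂ν =
      ∫ r : ℝ, (𝓕 f) r * ∫ x, h x * ef (r * ⟪x, e⟫) ∂ν := by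
    calc _ = ∫ x, (∫ r : ℝ, (𝓕 f) r * (h x * ef (r * ⟪x, e⟫))) ∂ν := by
          congr 1
          ext x
          rw [hinv, ← integral_mul_const]
          congr 1
          ext r
          ring
      _ = ∫ r : ℝ, ∫ x, (𝓕 f) r * (h x * ef (r * ⟪x, e⟫)) ∂ν := by
          apply integral_integral_swap
          have hi : Integrable (fun p : VV n × ℝ => M * ‖(𝓕 f) p.2‖) (ν.prod volume) := by
            exact ((integrable_const (1 : ℝ)).mul_prod ((𝓕 f).integrable.norm.const_mul M)).congr
              (Filter.Eventually.of_forall fun p => by simp)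
          refine hi.mono' ?_ ?_
          · have := (𝓕 f).continuous
            exact (by fun_prop : Continuous fun p : VV n × ℝ =>
              (𝓕 f) p.2 * (h p.1 * ef (p.2 * ⟪p.1, e⟫))).aestronglyMeasurable
          · refine Filter.Eventually.of_forall fun p => ?_
            simp only [Function.uncurry, norm_mul, norm_ef, mul_one]
            rw [mul_comm]
            gcongr
            exact hM _
      _ = _ := by
          congr 1
          ext r
          rw [integral_const_mul]
  have hsq : ∀ g : 𝓢(ℝ, ℂ), ∫⁻ r : ℝ, ‖g r‖ₑ ^ 2 = ENNReal.ofReal (∫ r : ℝ, ‖g r‖ ^ 2) := by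
    intro g
    rw [ofReal_integral_eq_lintegral_ofReal]
    · congr 1
      ext r
      rw [← ofReal_norm, ENNReal.ofReal_pow (norm_nonneg _)]
    · exact (g.memLp 2).integrable_norm_pow (by norm_num)
    · exact Filter.Eventually.of_forall fun r => by positivity
  rw [hswap, hsq f, ← SchwartzMap.integral_norm_sq_fourier, ← hsq]
  refine (enorm_integral_le_lintegral_enorm _).trans ?_
  have := ENNReal.lintegral_mul_le_Lp_mul_Lq (volume : Measure ℝ) (p := 2) (q := 2)
    (by constructor <;> norm_num)
    (f := fun r => ‖(𝓕 f) r‖ₑ) (g := fun r => ‖∫ x, h x * ef (r * ⟪x, e⟫) ∂ν‖ₑ)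
    (𝓕 f).continuous.enorm.measurable.aemeasurable hHc.enorm.measurable.aemeasurable
  simpa using this

open scoped ContDiff Manifold in
lemma exists_test (K U : Set ℝ) (hK : IsCompact K) (hU : IsOpen U) (hKU : K ⊆ U) :
    ∃ g : ℝ → ℝ, ContDiff ℝ ∞ g ∧ HasCompactSupport g ∧ (∀ x ∈ K, g x = 1) ∧
      (∀ x ∉ U, g x = 0) ∧ ∀ x, g x ∈ Set.Icc (0 : ℝ) 1 := by
  obtain ⟨R, hR⟩ := hK.isBounded.subset_ball (0 : ℝ)
  obtain ⟨f, hf0, hf1, hf⟩ := exists_contMDiffMap_zero_one_of_isClosed 𝓘(ℝ, ℝ) (n := ⊤)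
    (s := (U ∩ Metric.ball 0 R)ᶜ) (t := K) (hU.inter Metric.isOpen_ball).isClosed_compl
    hK.isClosed (by
      rw [Set.disjoint_compl_left_iff_subset]
      exact Set.subset_inter hKU hR)
  refine ⟨f, f.contMDiff.contDiff, ?_, fun x hx => hf1 hx, fun x hx => hf0 fun h => hx h.1, hf⟩
  apply HasCompactSupport.intro (isCompact_closedBall (0 : ℝ) R)
  intro x hx
  exact hf0 fun h => hx (Metric.ball_subset_closedBall h.2)

open scoped ContDiff in
lemma ac_of_L2 {n : ℕ} (ν : Measure (VV n)) [IsFiniteMeasure ν] (e : VV n) (h : VV n → ℂ)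
    (hc : Continuous h) (M : ℝ) (hM : ∀ x, ‖h x‖ ≤ M) (c : ℝ) (hc0 : 0 < c)
    (hre : ∀ᵐ x ∂ν, c ≤ (h x).re)
    (hL2 : ∫⁻ r : ℝ, ‖∫ x, h x * ef (r * ⟪x, e⟫) ∂ν‖ₑ ^ 2 < ⊤)
    (Z : Set ℝ) (hZ : MeasurableSet Z) (hZ0 : volume Z = 0) :
    ν ((fun x => ⟪x, e⟫) ⁻¹' Z) = 0 := by
  set L := ∫⁻ r : ℝ, ‖∫ x, h x * ef (r * ⟪x, e⟫) ∂ν‖ₑ ^ 2 with hL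
  have hP : Measurable (fun x : VV n => ⟪x, e⟫) :=
    (by fun_prop : Continuous (fun x : VV n => ⟪x, e⟫)).measurable
  rw [← Measure.map_apply hP hZ, hZ.measure_eq_iSup_isCompact]
  simp only [ENNReal.iSup_eq_zero]
  intro K hKZ hK
  rw [Measure.map_apply hP hK.measurableSet]
  have hK0 : volume K = 0 := measure_mono_null hKZ hZ0
  have hbound : ∀ ε : ℝ≥0∞, 0 < ε → ENNReal.ofReal c * ν ((fun x => ⟪x, e⟫) ⁻¹' K) ≤
      ε ^ (1 / 2 : ℝ) * L ^ (1 / 2 : ℝ) := by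
    intro ε hε
    obtain ⟨U, hKU, hU, hUε⟩ := K.exists_isOpen_lt_of_lt (μ := volume) ε (by rwa [hK0])
    obtain ⟨g, hg, hgc, hg1, hg0, hgI⟩ := exists_test K U hK hU hKU
    have hfc : ContDiff ℝ ∞ (fun x => (g x : ℂ)) := Complex.ofRealCLM.contDiff.comp hg
    have hfs : HasCompactSupport (fun x => (g x : ℂ)) :=
      hgc.comp_left (g := fun t : ℝ => (t : ℂ)) (by simp)
    have key := schwartz_pairing ν e h hc M hM (hfs.toSchwartzMap hfc)
    have hcoe : ∀ x, (hfs.toSchwartzMap hfc) x = (g x : ℂ) := fun x => rfl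
    simp only [hcoe] at key
    refine le_trans ?_ (key.trans ?_)
    · have hgcont := hg.continuous
      have hInteg : Integrable (fun x => (g ⟪x, e⟫ : ℂ) * h x) ν := by
        refine (integrable_const M).mono' ?_ ?_
        · exact (by fun_prop : Continuous fun x => (g ⟪x, e⟫ : ℂ) * h x).aestronglyMeasurable
        · refine Filter.Eventually.of_forall fun x => ?_
          rw [norm_mul, Complex.norm_real, Real.norm_of_nonneg (hgI _).1]
          calc _ ≤ 1 * M := mul_le_mul (hgI _).2 (hM x) (norm_nonneg _) (by norm_num)
            _ = M := one_mul _
      have h1 : (∫ x, (g ⟪x, e⟫ : ℂ) * h x ∂ν).re = ∫ x, g ⟪x, e⟫ * (h x).re ∂ν := by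
        have := integral_re hInteg
        simp only [RCLike.re_to_complex, Complex.re_ofReal_mul] at this
        exact this.symm
      have hIntegRe : Integrable (fun x => g ⟪x, e⟫ * (h x).re) ν := by
        have := hInteg.re
        simpa only [RCLike.re_to_complex, Complex.re_ofReal_mul] using this
      have h2 : ∫ x, ((fun x => ⟪x, e⟫) ⁻¹' K).indicator (fun _ => c) x ∂ν ≤
          ∫ x, g ⟪x, e⟫ * (h x).re ∂ν := by
        apply integral_mono_ae ((integrable_const c).indicator (hP hK.measurableSet)) hIntegRe
        filter_upwards [hre] with x hx
        by_cases hxK : x ∈ (fun x => ⟪x, e⟫) ⁻¹' K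
        · rw [Set.indicator_of_mem hxK, hg1 _ hxK, one_mul]
          exact hx
        · rw [Set.indicator_of_notMem hxK]
          exact mul_nonneg (hgI _).1 (hc0.le.trans hx)
      rw [integral_indicator_const _ (hP hK.measurableSet)] at h2
      have h3 : c * ν.real ((fun x => ⟪x, e⟫) ⁻¹' K) ≤ ‖∫ x, (g ⟪x, e⟫ : ℂ) * h x ∂ν‖ := by
        refine le_trans ?_ (Complex.re_le_norm _)
        rw [h1]
        simpa [mul_comm] using h2
      rw [← ofReal_norm, ← ofReal_measureReal (measure_ne_top _ _),
        ← ENNReal.ofReal_mul hc0.le]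
      exact ENNReal.ofReal_le_ofReal h3
    · gcongr
      calc ∫⁻ r : ℝ, ‖(g r : ℂ)‖ₑ ^ 2 ≤ ∫⁻ r : ℝ, U.indicator 1 r := by
            apply lintegral_mono
            intro r
            by_cases hr : r ∈ U
            · simp only [Set.indicator_of_mem hr, Pi.one_apply]
              rw [← ofReal_norm, Complex.norm_real, Real.norm_of_nonneg (hgI _).1]
              apply pow_le_one₀ zero_le
              rw [ENNReal.ofReal_le_one]
              exact (hgI r).2
            · simp [hg0 r hr]
        _ = volume U := lintegral_indicator_one hU.measurableSet
        _ ≤ ε := hUε.le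
  have hzero : ENNReal.ofReal c * ν ((fun x => ⟪x, e⟫) ⁻¹' K) ≤ 0 := by
    have hlim : Filter.Tendsto (fun ε : ℝ≥0∞ => ε ^ (1 / 2 : ℝ) * L ^ (1 / 2 : ℝ)) (𝓝[>] 0) (𝓝 0) := by
      have h1 : Filter.Tendsto (fun ε : ℝ≥0∞ => ε ^ (1 / 2 : ℝ)) (𝓝[>] 0) (𝓝 0) := by
        have := (ENNReal.continuous_rpow_const (y := (1 / 2 : ℝ))).tendsto 0
        rw [ENNReal.zero_rpow_of_pos (by norm_num)] at this
        exact this.mono_left nhdsWithin_le_nhds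
      have := ENNReal.Tendsto.mul_const (b := L ^ (1 / 2 : ℝ)) h1
        (Or.inr (ENNReal.rpow_ne_top_of_nonneg (by norm_num) hL2.ne))
      simpa using this
    exact ge_of_tendsto hlim (by filter_upwards [self_mem_nhdsWithin] with ε hε using hbound ε hε)
  simpa [hc0.not_ge] using hzero

/-- Fourier transform of a measure -/
noncomputable def nuhat {n : ℕ} (ν : Measure (VV n)) (ξ : VV n) : ℂ := ∫ x, ef ⟪x, ξ⟫ ∂ν

lemma continuous_nuhat {n : ℕ} (ν : Measure (VV n)) [IsFiniteMeasure ν] :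
    Continuous (nuhat ν) := by
  unfold nuhat
  apply continuous_of_dominated (bound := fun _ => (1 : ℝ))
  · intro r
    exact (by fun_prop : Continuous fun x => ef ⟪x, r⟫).aestronglyMeasurable
  · intro r
    exact Filter.Eventually.of_forall fun x => by simp
  · exact integrable_const _
  · exact Filter.Eventually.of_forall fun x => by fun_prop

/-- the smoothing weight: Fourier transform of the indicator of a small ball -/
noncomputable def hh {n : ℕ} (x₀ x : VV n) : ℂ :=
  ∫ ζ in Metric.ball (0 : VV n) (1 / 8), ef ⟪x - x₀, ζ⟫

instance finBall {n : ℕ} (x : VV n) (r : ℝ) :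
    IsFiniteMeasure ((volume : Measure (VV n)).restrict (Metric.ball x r)) :=
  ⟨by simpa using measure_ball_lt_top⟩

lemma continuous_hh {n : ℕ} (x₀ : VV n) : Continuous (hh x₀) := by
  unfold hh
  apply continuous_of_dominated (bound := fun _ => (1 : ℝ))
  · intro r
    exact (by fun_prop : Continuous fun x => ef ⟪r - x₀, x⟫).aestronglyMeasurable
  · intro r
    exact Filter.Eventually.of_forall fun x => by simp
  · exact integrable_const _
  · exact Filter.Eventually.of_forall fun x => by fun_prop

lemma norm_hh_le {n : ℕ} (x₀ x : VV n) :
    ‖hh x₀ x‖ ≤ volume.real (Metric.ball (0 : VV n) (1 / 8)) := by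
  unfold hh
  refine (norm_integral_le_integral_norm _).trans ?_
  simp

lemma hh_re {n : ℕ} (x₀ x : VV n) (hx : ‖x - x₀‖ ≤ 1) :
    1 / 2 * volume.real (Metric.ball (0 : VV n) (1 / 8)) ≤ (hh x₀ x).re := by
  unfold hh
  have hInteg : Integrable (fun ζ => ef ⟪x - x₀, ζ⟫)
      ((volume : Measure (VV n)).restrict (Metric.ball 0 (1 / 8))) := by
    refine (integrable_const (1 : ℝ)).mono' ?_ (Filter.Eventually.of_forall fun x => by simp)
    exact (by fun_prop : Continuous fun ζ => ef ⟪x - x₀, ζ⟫).aestronglyMeasurable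
  have h1 := integral_re hInteg
  simp only [RCLike.re_to_complex] at h1
  rw [← h1]
  have h2 : ∫ ζ in Metric.ball (0 : VV n) (1 / 8), (1 / 2 : ℝ) =
      1 / 2 * volume.real (Metric.ball (0 : VV n) (1 / 8)) := by
    simp [mul_comm]
  rw [← h2]
  apply integral_mono_ae (integrable_const _) hInteg.re
  filter_upwards [ae_restrict_mem Metric.isOpen_ball.measurableSet] with ζ hζ
  simp only [RCLike.re_to_complex, ef_re]
  rw [mem_ball_zero_iff] at hζ
  have h3 : |⟪x - x₀, ζ⟫| ≤ 1 / 8 := by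
    refine (abs_real_inner_le_norm _ _).trans ?_
    nlinarith [norm_nonneg ζ, norm_nonneg (x - x₀)]
  have hpi := Real.pi_pos
  rw [← Real.cos_abs, abs_mul, abs_of_pos (by positivity : 0 < 2 * Real.pi),
    ← Real.cos_pi_div_three]
  apply Real.cos_le_cos_of_nonneg_of_le_pi (by positivity) (by linarith)
  nlinarith

lemma hh_pointwise {n : ℕ} (ν : Measure (VV n)) [IsFiniteMeasure ν] (x₀ p : VV n) :
    ‖∫ x, hh x₀ x * ef ⟪x, p⟫ ∂ν‖ₑ ^ 2 ≤ volume (Metric.ball (0 : VV n) (1 / 8)) *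
      ∫⁻ ζ in Metric.ball p (1 / 8), ‖nuhat ν ζ‖ₑ ^ 2 := by
  set B := (volume : Measure (VV n)).restrict (Metric.ball 0 (1 / 8)) with hB
  have h1 : ∫ x, hh x₀ x * ef ⟪x, p⟫ ∂ν = ∫ ζ, ef (-⟪x₀, ζ⟫) * nuhat ν (ζ + p) ∂B := by
    calc _ = ∫ x, (∫ ζ, ef (-⟪x₀, ζ⟫) * ef ⟪x, ζ + p⟫ ∂B) ∂ν := by
          congr 1
          ext x
          unfold hh
          rw [← integral_mul_const]
          congr 1
          ext ζ
          rw [← ef_add, ← ef_add]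
          congr 1
          rw [inner_sub_left, inner_add_right]
          ring
      _ = ∫ ζ, (∫ x, ef (-⟪x₀, ζ⟫) * ef ⟪x, ζ + p⟫ ∂ν) ∂B := by
          apply integral_integral_swap
          refine (integrable_const (1 : ℝ)).mono' ?_ (Filter.Eventually.of_forall fun x => by
            simp [Function.uncurry])
          exact (by fun_prop : Continuous fun q : VV n × VV n =>
            ef (-⟪x₀, q.2⟫) * ef ⟪q.1, q.2 + p⟫).aestronglyMeasurable
      _ = _ := by
          congr 1
          ext ζ
          rw [integral_const_mul]
          rfl
  have hcn := continuous_nuhat ν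
  have h2 : ‖∫ x, hh x₀ x * ef ⟪x, p⟫ ∂ν‖ₑ ≤ ∫⁻ ζ, ‖nuhat ν (ζ + p)‖ₑ ∂B := by
    rw [h1]
    refine (enorm_integral_le_lintegral_enorm _).trans (le_of_eq ?_)
    congr 1
    ext ζ
    rw [enorm_mul, ← ofReal_norm, norm_ef]
    simp
  have h3 : ∫⁻ ζ, ‖nuhat ν (ζ + p)‖ₑ ∂B ≤
      (∫⁻ ζ, ‖nuhat ν (ζ + p)‖ₑ ^ 2 ∂B) ^ (1 / 2 : ℝ) * (B Set.univ) ^ (1 / 2 : ℝ) := by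
    have := ENNReal.lintegral_mul_le_Lp_mul_Lq B (p := 2) (q := 2)
      (by constructor <;> norm_num)
      (f := fun r => ‖nuhat ν (r + p)‖ₑ) (g := fun r => 1)
      (by fun_prop : Continuous fun r => ‖nuhat ν (r + p)‖ₑ).measurable.aemeasurable
      aemeasurable_const
    simpa using this
  have h4 : ∫⁻ ζ, ‖nuhat ν (ζ + p)‖ₑ ^ 2 ∂B =
      ∫⁻ ζ in Metric.ball p (1 / 8), ‖nuhat ν ζ‖ₑ ^ 2 := by
    have hmp := measurePreserving_add_right (volume : Measure (VV n)) p
    have := hmp.setLIntegral_comp_preimage (s := Metric.ball p (1 / 8))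
      Metric.isOpen_ball.measurableSet (f := fun ζ => ‖nuhat ν ζ‖ₑ ^ 2)
      (by fun_prop : Continuous fun r => ‖nuhat ν r‖ₑ ^ 2).measurable
    rw [← this, hB]
    congr 2
    ext y
    simp [dist_eq_norm]
  calc _ ≤ ((∫⁻ ζ, ‖nuhat ν (ζ + p)‖ₑ ^ 2 ∂B) ^ (1 / 2 : ℝ) * (B Set.univ) ^ (1 / 2 : ℝ)) ^ 2 := by
        gcongr
        exact h2.trans h3
    _ = (∫⁻ ζ, ‖nuhat ν (ζ + p)‖ₑ ^ 2 ∂B) * B Set.univ := by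
        rw [mul_pow, ← ENNReal.rpow_natCast, ← ENNReal.rpow_natCast, ← ENNReal.rpow_mul,
          ← ENNReal.rpow_mul]
        norm_num
    _ = _ := by
        rw [h4, mul_comm]
        simp [hB]

lemma packing {n : ℕ} (T : Finset (VV n)) (R : ℝ) (hR : 1 ≤ R) (hT : ∀ e ∈ T, ‖e‖ = 1)
    (hsep : ∀ e ∈ T, ∀ f ∈ T, e ≠ f → 1 / R < dist e f) (G : VV n → ℝ≥0∞) (hG : Measurable G) :
    ∑ e ∈ T, ∫⁻ r in Set.Icc R (2 * R), ∫⁻ ζ in Metric.ball (r • e) (1 / 8), G ζ ≤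
      ∫⁻ ζ in Metric.ball 0 (3 * R), G ζ := by
  set S : VV n → VV n → Set ℝ := fun ζ e => {r | r ∈ Set.Icc R (2 * R) ∧ dist ζ (r • e) < 1 / 8}
    with hS
  have hmS : ∀ ζ e, MeasurableSet (S ζ e) := by
    intro ζ e
    exact measurableSet_Icc.inter
      (isOpen_lt (by fun_prop) continuous_const : IsOpen {r : ℝ | dist ζ (r • e) < 1 / 8}).measurableSet
  have hpt : ∀ ζ, ∑ e ∈ T, volume (S ζ e) ≤ (Metric.ball (0 : VV n) (3 * R)).indicator 1 ζ := by
    intro ζ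
    by_cases hex : ∃ e ∈ T, (S ζ e).Nonempty
    · obtain ⟨e, he, r, ⟨hr1, hr2⟩, hr⟩ := hex
      have hζ : ζ ∈ Metric.ball (0 : VV n) (3 * R) := by
        rw [mem_ball_zero_iff]
        have h1 : ‖ζ‖ ≤ ‖ζ - r • e‖ + ‖r • e‖ := by
          simpa using norm_add_le (ζ - r • e) (r • e)
        rw [← dist_eq_norm, norm_smul, hT e he, Real.norm_of_nonneg (by linarith)] at h1
        linarith
      rw [Set.indicator_of_mem hζ, Finset.sum_eq_single e]
      · calc volume (S ζ e) ≤ volume (Metric.ball ‖ζ‖ (1 / 8)) := by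
              apply measure_mono
              rintro t ⟨⟨ht1, ht2⟩, ht⟩
              rw [Metric.mem_ball, dist_comm, Real.dist_eq]
              have h1 := abs_norm_sub_norm_le ζ (t • e)
              rw [norm_smul, hT e he, Real.norm_of_nonneg (by linarith), mul_one,
                ← dist_eq_norm] at h1
              linarith
          _ ≤ 1 := by
              rw [Real.volume_ball, ENNReal.ofReal_le_one]
              norm_num
          _ = _ := rfl
      · intro f hf hfe
        convert measure_empty (μ := (volume : Measure ℝ))
        rw [Set.eq_empty_iff_forall_notMem]
        rintro t ⟨⟨ht1, ht2⟩, ht⟩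
        have hd := hsep f hf e he hfe
        have h1 : dist (r • e) (t • f) < 1 / 4 := by
          have := dist_triangle_left (r • e) (t • f) ζ
          linarith
        have h2 : |r - t| < 1 / 4 := by
          have h3 := abs_norm_sub_norm_le (r • e) (t • f)
          rw [norm_smul, norm_smul, hT e he, hT f hf, Real.norm_of_nonneg (by linarith),
            Real.norm_of_nonneg (by linarith), mul_one, mul_one, ← dist_eq_norm] at h3
          linarith
        have h4 : r * dist f e < 1 / 2 := by
          have h5 : r • (e - f) = (r • e - t • f) + (t - r) • f := by module
          have h6 : ‖r • (e - f)‖ ≤ ‖r • e - t • f‖ + ‖(t - r) • f‖ := by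
            rw [h5]; exact norm_add_le _ _
          rw [norm_smul, norm_smul, hT f hf, ← dist_eq_norm, ← dist_eq_norm, mul_one,
            Real.norm_of_nonneg (by linarith), dist_comm e f, Real.norm_eq_abs, abs_sub_comm] at h6
          linarith
        have h7 : 1 < R * dist f e := by
          rw [div_lt_iff₀ (by linarith)] at hd
          linarith
        nlinarith [dist_nonneg (x := f) (y := e)]
      · intro h; exact absurd he h
    · push Not at hex
      rw [Finset.sum_eq_zero]
      · exact zero_le
      · intro e he
        rw [hex e he, measure_empty]
  have hterm : ∀ e, ∫⁻ r in Set.Icc R (2 * R), ∫⁻ ζ in Metric.ball (r • e) (1 / 8), G ζ =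
      ∫⁻ ζ, G ζ * volume (S ζ e) := by
    intro e
    calc _ = ∫⁻ r in Set.Icc R (2 * R), ∫⁻ ζ,
            ({q : ℝ × VV n | dist q.2 (q.1 • e) < 1 / 8}.indicator (fun q => G q.2)) (r, ζ) := by
          congr 1
          ext r
          rw [← lintegral_indicator Metric.isOpen_ball.measurableSet]
          rfl
      _ = ∫⁻ ζ, ∫⁻ r in Set.Icc R (2 * R),
            ({q : ℝ × VV n | dist q.2 (q.1 • e) < 1 / 8}.indicator (fun q => G q.2)) (r, ζ) := by
          apply lintegral_lintegral_swap
          apply Measurable.aemeasurable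
          apply Measurable.indicator (hG.comp measurable_snd)
          exact (isOpen_lt (by fun_prop) continuous_const).measurableSet
      _ = _ := by
          congr 1
          ext ζ
          rw [← lintegral_indicator measurableSet_Icc, ← lintegral_indicator_const (hmS ζ e)]
          congr 1
          ext r
          by_cases h1 : r ∈ Set.Icc R (2 * R) <;> by_cases h2 : dist ζ (r • e) < 1 / 8 <;>
            simp [Set.indicator, hS, h2, h1] <;> simp_all
  simp only [hterm]
  rw [← lintegral_indicator Metric.isOpen_ball.measurableSet, ← lintegral_finsetSum']
  · apply lintegral_mono
    intro ζ
    simp only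
    rw [← Finset.mul_sum]
    refine (mul_le_mul_right (hpt ζ) _).trans (le_of_eq ?_)
    by_cases hζ : ζ ∈ Metric.ball (0 : VV n) (3 * R) <;> simp [hζ]
  · intro e he
    apply Measurable.aemeasurable
    apply hG.mul
    have : MeasurableSet {q : VV n × ℝ | q.2 ∈ Set.Icc R (2 * R) ∧ dist q.1 (q.2 • e) < 1 / 8} :=
      (measurable_snd measurableSet_Icc).inter
        (isOpen_lt (by fun_prop) continuous_const :
          IsOpen {q : VV n × ℝ | dist q.1 (q.2 • e) < 1 / 8}).measurableSet
    exact measurable_measure_prodMk_left this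

lemma gauss_ft {n : ℕ} (R : ℝ) (hR : 0 < R) (v : VV n) :
    ∫ ζ : VV n, ((Real.exp (-(Real.pi / R ^ 2) * ‖ζ‖ ^ 2) : ℝ) : ℂ) * ef ⟪v, ζ⟫ =
      ((R ^ n * Real.exp (-(Real.pi * R ^ 2) * ‖v‖ ^ 2) : ℝ) : ℂ) := by
  have hpi := Real.pi_pos
  have hb : 0 < (((Real.pi / R ^ 2 : ℝ) : ℂ)).re := by
    rw [Complex.ofReal_re]; positivity
  have h := GaussianFourier.integral_cexp_neg_mul_sq_norm_add hb (2 * Real.pi * Complex.I) v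
  have e1 : ∀ ζ : VV n, ((Real.exp (-(Real.pi / R ^ 2) * ‖ζ‖ ^ 2) : ℝ) : ℂ) * ef ⟪v, ζ⟫ =
      Complex.exp (-((Real.pi / R ^ 2 : ℝ) : ℂ) * ‖ζ‖ ^ 2 + 2 * Real.pi * Complex.I * ⟪v, ζ⟫) := by
    intro ζ
    rw [Complex.exp_add, Complex.ofReal_exp, ef]
    congr 2
    · push_cast; ring
    · push_cast; ring
  simp only [e1]
  rw [h]
  have hR' : (R : ℂ) ≠ 0 := by exact_mod_cast hR.ne'
  have hpi' : (Real.pi : ℂ) ≠ 0 := by exact_mod_cast hpi.ne'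
  have e2 : (Real.pi : ℂ) / ((Real.pi / R ^ 2 : ℝ) : ℂ) = ((R ^ 2 : ℝ) : ℂ) := by
    push_cast; field_simp
  rw [e2, finrank_euclideanSpace_fin]
  have e3 : ((R ^ 2 : ℝ) : ℂ) ^ ((n : ℂ) / 2) = ((R ^ n : ℝ) : ℂ) := by
    rw [show ((n : ℂ) / 2) = (((n : ℝ) / 2 : ℝ) : ℂ) by push_cast; rfl,
      ← Complex.ofReal_cpow (by positivity)]
    congr 1
    rw [← Real.rpow_natCast R 2, ← Real.rpow_mul hR.le, ← Real.rpow_natCast R n]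
    congr 1
    push_cast
    ring
  rw [e3, Complex.ofReal_mul, Complex.ofReal_exp]
  congr 2
  push_cast
  field_simp
  rw [Complex.I_sq]
  ring

lemma gauss_integrable {n : ℕ} (b : ℝ) (hb : 0 < b) :
    Integrable (fun ζ : VV n => Real.exp (-b * ‖ζ‖ ^ 2)) := by
  have := (GaussianFourier.integrable_cexp_neg_mul_sq_norm_add (b := (b : ℂ))
    (by simpa using hb) 0 (0 : VV n)).norm
  refine this.congr (Filter.Eventually.of_forall fun ζ => ?_)
  simp only
  rw [Complex.norm_exp]
  congr 1
  simp [← Complex.ofReal_pow]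

lemma conj_ef (t : ℝ) : (starRingEnd ℂ) (ef t) = ef (-t) := by
  unfold ef
  rw [← Complex.exp_conj]
  congr 1
  rw [map_mul, Complex.conj_I, Complex.conj_ofReal]
  push_cast
  ring

lemma normsq_nuhat {n : ℕ} (ν : Measure (VV n)) [IsFiniteMeasure ν] (ζ : VV n) :
    ((‖nuhat ν ζ‖ ^ 2 : ℝ) : ℂ) = ∫ q : VV n × VV n, ef ⟪q.1 - q.2, ζ⟫ ∂(ν.prod ν) := by
  have h1 : ((‖nuhat ν ζ‖ ^ 2 : ℝ) : ℂ) = nuhat ν ζ * (starRingEnd ℂ) (nuhat ν ζ) := by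
    rw [Complex.mul_conj, Complex.normSq_eq_norm_sq]
  rw [h1]
  unfold nuhat
  rw [← integral_conj, ← integral_prod_mul]
  congr 1
  ext q
  rw [conj_ef, ← ef_add, inner_sub_left]
  rfl

lemma energy_bound {n : ℕ} (ν : Measure (VV n)) [IsFiniteMeasure ν] (R : ℝ) (hR : 0 < R) :
    ∫⁻ ζ in Metric.ball 0 (3 * R), ‖nuhat ν ζ‖ₑ ^ 2 ≤
      ENNReal.ofReal (Real.exp (9 * Real.pi) * R ^ n) *
        ∫⁻ x, ∫⁻ y, ENNReal.ofReal (Real.exp (-(Real.pi * R ^ 2) * ‖x - y‖ ^ 2)) ∂ν ∂ν := by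
  have hpi := Real.pi_pos
  have hcn := continuous_nuhat ν
  set w : VV n → ℝ := fun ζ => Real.exp (-(Real.pi / R ^ 2) * ‖ζ‖ ^ 2) with hw
  have hwc : Continuous w := by rw [hw]; fun_prop
  have hwi : Integrable w := gauss_integrable _ (by positivity)
  have hbd : ∀ ζ, ‖nuhat ν ζ‖ ≤ ν.real Set.univ := by
    intro ζ
    unfold nuhat
    refine (norm_integral_le_integral_norm _).trans ?_
    simp
  have hInteg : Integrable (fun ζ => w ζ * ‖nuhat ν ζ‖ ^ 2) := by
    refine (hwi.mul_const (ν.real Set.univ ^ 2)).mono' ?_ (Filter.Eventually.of_forall fun ζ => ?_)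
    · exact (by fun_prop : Continuous fun ζ => w ζ * ‖nuhat ν ζ‖ ^ 2).aestronglyMeasurable
    · rw [norm_mul, Real.norm_of_nonneg (Real.exp_pos _).le, norm_pow, norm_norm]
      gcongr
      exact hbd ζ
  have hgc : Continuous fun q : VV n × VV n => Real.exp (-(Real.pi * R ^ 2) * ‖q.1 - q.2‖ ^ 2) := by
    fun_prop
  have heq : ∫ ζ, w ζ * ‖nuhat ν ζ‖ ^ 2 =
      ∫ q : VV n × VV n, R ^ n * Real.exp (-(Real.pi * R ^ 2) * ‖q.1 - q.2‖ ^ 2) ∂(ν.prod ν) := by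
    rw [← Complex.ofReal_inj, ← integral_complex_ofReal, ← integral_complex_ofReal]
    calc _ = ∫ ζ, (∫ q : VV n × VV n, (w ζ : ℂ) * ef ⟪q.1 - q.2, ζ⟫ ∂(ν.prod ν)) := by
          congr 1
          ext ζ
          rw [Complex.ofReal_mul, normsq_nuhat, integral_const_mul]
      _ = ∫ q : VV n × VV n, (∫ ζ, (w ζ : ℂ) * ef ⟪q.1 - q.2, ζ⟫) ∂(ν.prod ν) := by
          apply integral_integral_swap
          have hi : Integrable (fun p : VV n × (VV n × VV n) => w p.1)
              (volume.prod (ν.prod ν)) := by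
            exact (hwi.mul_prod (integrable_const (1 : ℝ))).congr
              (Filter.Eventually.of_forall fun p => by simp)
          refine hi.mono' ?_ (Filter.Eventually.of_forall fun p => ?_)
          · exact (by fun_prop : Continuous fun p : VV n × (VV n × VV n) =>
              (w p.1 : ℂ) * ef ⟪p.2.1 - p.2.2, p.1⟫).aestronglyMeasurable
          · simp only [Function.uncurry, norm_mul, norm_ef, mul_one, Complex.norm_real]
            exact (Real.norm_of_nonneg (Real.exp_pos _).le).le
      _ = _ := by
          congr 1
          ext q
          exact gauss_ft R hR _
  calc ∫⁻ ζ in Metric.ball 0 (3 * R), ‖nuhat ν ζ‖ₑ ^ 2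
      ≤ ∫⁻ ζ in Metric.ball 0 (3 * R), ENNReal.ofReal (Real.exp (9 * Real.pi)) *
          ENNReal.ofReal (w ζ * ‖nuhat ν ζ‖ ^ 2) := by
        apply setLIntegral_mono' Metric.isOpen_ball.measurableSet
        intro ζ hζ
        rw [mem_ball_zero_iff] at hζ
        rw [← ofReal_norm, ← ENNReal.ofReal_pow (norm_nonneg _),
          ← ENNReal.ofReal_mul (Real.exp_pos _).le]
        apply ENNReal.ofReal_le_ofReal
        rw [← mul_assoc, hw, ← Real.exp_add]
        apply le_mul_of_one_le_left (by positivity)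
        apply Real.one_le_exp
        have : Real.pi / R ^ 2 * ‖ζ‖ ^ 2 ≤ 9 * Real.pi := by
          rw [div_mul_eq_mul_div, div_le_iff₀ (by positivity)]
          have : ‖ζ‖ ^ 2 ≤ (3 * R) ^ 2 := by gcongr
          nlinarith
        linarith
    _ ≤ ∫⁻ ζ, ENNReal.ofReal (Real.exp (9 * Real.pi)) *
          ENNReal.ofReal (w ζ * ‖nuhat ν ζ‖ ^ 2) := setLIntegral_le_lintegral _ _
    _ = ENNReal.ofReal (Real.exp (9 * Real.pi)) * ENNReal.ofReal (∫ ζ, w ζ * ‖nuhat ν ζ‖ ^ 2) := by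
        rw [lintegral_const_mul', ofReal_integral_eq_lintegral_ofReal hInteg]
        · exact Filter.Eventually.of_forall fun ζ => by
            have := (Real.exp_pos (-(Real.pi / R ^ 2) * ‖ζ‖ ^ 2)).le
            positivity
        · exact ENNReal.ofReal_ne_top
    _ = _ := by
        rw [heq, integral_const_mul, ENNReal.ofReal_mul (by positivity), ENNReal.ofReal_mul
          (by positivity), mul_assoc, ofReal_integral_eq_lintegral_ofReal, lintegral_prod]
        · exact (ENNReal.continuous_ofReal.comp hgc).measurable.aemeasurable
        · refine (integrable_const (1 : ℝ)).mono' hgc.aestronglyMeasurable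
            (Filter.Eventually.of_forall fun q => ?_)
          rw [Real.norm_of_nonneg (Real.exp_pos _).le, Real.exp_le_one_iff]
          have : 0 ≤ Real.pi * R ^ 2 * ‖q.1 - q.2‖ ^ 2 := by positivity
          linarith
        · exact Filter.Eventually.of_forall fun q => (Real.exp_pos _).le

lemma summable_gauss (s : ℝ) :
    Summable fun k : ℕ => Real.exp (-(Real.pi * (k : ℝ) ^ 2)) * ((k : ℝ) + 1) ^ s := by
  obtain ⟨m, hm⟩ := exists_nat_ge s
  have h1 := (Real.summable_pow_mul_exp_neg_nat_mul m (r := 1) one_pos)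
  have h2 := ((summable_nat_add_iff 1).2 h1).mul_left (Real.exp 1)
  refine Summable.of_nonneg_of_le (fun k => by positivity) (fun k => ?_) h2
  have hk : (0 : ℝ) ≤ k := by positivity
  have e1 : Real.exp (-(Real.pi * (k : ℝ) ^ 2)) ≤ Real.exp (-k) := by
    apply Real.exp_le_exp.2
    have : (k : ℝ) ≤ (k : ℝ) ^ 2 := by
      have : k ≤ k ^ 2 := Nat.le_self_pow (by norm_num) k
      exact_mod_cast this
    nlinarith [Real.pi_gt_three]
  have e2 : ((k : ℝ) + 1) ^ s ≤ ((k : ℝ) + 1) ^ m := by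
    rw [← Real.rpow_natCast]
    exact Real.rpow_le_rpow_of_exponent_le (by linarith) hm
  calc _ ≤ Real.exp (-k) * ((k : ℝ) + 1) ^ m := by gcongr
    _ = _ := by
      push_cast
      rw [show Real.exp (-(k : ℝ)) = Real.exp 1 * Real.exp (-1 * ((k : ℝ) + 1)) by
        rw [← Real.exp_add]; congr 1; ring]
      ring

lemma growth_gauss {n : ℕ} (ν : Measure (VV n)) (s C : ℝ) (hC : 0 ≤ C) (x : VV n)
    (hg : ∀ r : ℝ, 0 < r → ν (Metric.ball x r) ≤ ENNReal.ofReal (C * r ^ s)) (R : ℝ) (hR : 0 < R) :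
    ∫⁻ y, ENNReal.ofReal (Real.exp (-(Real.pi * R ^ 2) * ‖x - y‖ ^ 2)) ∂ν ≤
      ENNReal.ofReal (C * (∑' k : ℕ, Real.exp (-(Real.pi * (k : ℝ) ^ 2)) * ((k : ℝ) + 1) ^ s) *
        R ^ (-s)) := by
  have hpi := Real.pi_pos
  calc _ ≤ ∫⁻ y, ∑' k : ℕ, (Metric.ball x (((k : ℝ) + 1) / R)).indicator
        (fun _ => ENNReal.ofReal (Real.exp (-(Real.pi * (k : ℝ) ^ 2)))) y ∂ν := by
        apply lintegral_mono
        intro y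
        set k := ⌊R * ‖x - y‖⌋₊ with hk
        have h0 : 0 ≤ R * ‖x - y‖ := by positivity
        have hk1 : (k : ℝ) ≤ R * ‖x - y‖ := Nat.floor_le h0
        have hk2 : R * ‖x - y‖ < (k : ℝ) + 1 := Nat.lt_floor_add_one _
        refine le_trans ?_ (ENNReal.le_tsum k)
        rw [Set.indicator_of_mem]
        · apply ENNReal.ofReal_le_ofReal
          apply Real.exp_le_exp.2
          have : (k : ℝ) ^ 2 ≤ (R * ‖x - y‖) ^ 2 := by gcongr
          nlinarith
        · rw [Metric.mem_ball, dist_comm, dist_eq_norm, lt_div_iff₀ hR]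
          linarith
    _ = ∑' k : ℕ, ENNReal.ofReal (Real.exp (-(Real.pi * (k : ℝ) ^ 2))) *
          ν (Metric.ball x (((k : ℝ) + 1) / R)) := by
        rw [lintegral_tsum]
        · congr 1
          ext k
          rw [lintegral_indicator_const Metric.isOpen_ball.measurableSet]
        · intro k
          exact (measurable_const.indicator Metric.isOpen_ball.measurableSet).aemeasurable
    _ ≤ ∑' k : ℕ, ENNReal.ofReal (C * R ^ (-s) *
          (Real.exp (-(Real.pi * (k : ℝ) ^ 2)) * ((k : ℝ) + 1) ^ s)) := by
        apply ENNReal.tsum_le_tsum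
        intro k
        refine (mul_le_mul_right (hg _ (by positivity)) _).trans (le_of_eq ?_)
        rw [← ENNReal.ofReal_mul (Real.exp_pos _).le, Real.div_rpow (by positivity) hR.le,
          Real.rpow_neg hR.le]
        congr 1
        field_simp
    _ = _ := by
        rw [← ENNReal.ofReal_tsum_of_nonneg, tsum_mul_left]
        · congr 1; ring
        · intro k; positivity
        · exact (summable_gauss s).mul_left _

lemma energy_growth {n : ℕ} (ν : Measure (VV n)) [IsFiniteMeasure ν] (s C : ℝ) (hC : 0 ≤ C)
    (hg : ∀ᵐ x ∂ν, ∀ r : ℝ, 0 < r → ν (Metric.ball x r) ≤ ENNReal.ofReal (C * r ^ s)) :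
    ∃ C' : ℝ, 0 ≤ C' ∧ ∀ R : ℝ, 0 < R → ∫⁻ ζ in Metric.ball 0 (3 * R), ‖nuhat ν ζ‖ₑ ^ 2 ≤
      ENNReal.ofReal (C' * R ^ ((n : ℝ) - s)) := by
  set σ := ∑' k : ℕ, Real.exp (-(Real.pi * (k : ℝ) ^ 2)) * ((k : ℝ) + 1) ^ s
  have hσ : 0 ≤ σ := tsum_nonneg fun k => by positivity
  refine ⟨Real.exp (9 * Real.pi) * (C * σ) * ν.real Set.univ, by positivity, fun R hR => ?_⟩
  refine (energy_bound ν R hR).trans ?_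
  calc _ ≤ ENNReal.ofReal (Real.exp (9 * Real.pi) * R ^ n) *
        ∫⁻ _, ENNReal.ofReal (C * σ * R ^ (-s)) ∂ν := by
        refine mul_le_mul_right (lintegral_mono_ae ?_) _
        filter_upwards [hg] with x hx
        exact growth_gauss ν s C hC x hx R hR
    _ = _ := by
        rw [lintegral_const, ← ofReal_measureReal (measure_ne_top ν _),
          ← ENNReal.ofReal_mul (by positivity), ← ENNReal.ofReal_mul (by positivity)]
        congr 1
        rw [sub_eq_add_neg, Real.rpow_add hR, Real.rpow_natCast]
        ring

lemma exists_cover_of_card_le {n : ℕ} (A : Set (VV n)) (ε : ℝ) (hε : 0 < ε) (b : ℝ)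
    (hb : 0 ≤ b)
    (h : ∀ T : Finset (VV n), (T : Set (VV n)) ⊆ A →
      (∀ e ∈ T, ∀ f ∈ T, e ≠ f → ε < dist e f) → (T.card : ℝ) ≤ b) :
    ∃ T : Finset (VV n), (T.card : ℝ) ≤ b ∧ A ⊆ ⋃ c ∈ T, Metric.closedBall c ε := by
  set ε' : ℝ≥0 := ⟨ε, hε.le⟩ with hε'
  have hsepdist : ∀ T : Set (VV n), Metric.IsSeparated (ε' : ℝ≥0∞) T →
      ∀ e ∈ T, ∀ f ∈ T, e ≠ f → ε < dist e f := by
    intro T hT e he f hf hef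
    have h1 : (ε' : ℝ≥0∞) < edist e f := hT he hf hef
    rw [edist_nndist, ENNReal.coe_lt_coe] at h1
    exact_mod_cast h1
  have hpack : Metric.packingNumber ε' A ≤ (⌊b⌋₊ : ℕ∞) := by
    refine iSup_le fun C => iSup_le fun hCA => iSup_le fun hC => ?_
    by_contra! hlt
    have hle : ((⌊b⌋₊ + 1 : ℕ) : ℕ∞) ≤ C.encard := by
      push_cast
      exact Order.add_one_le_of_lt hlt
    obtain ⟨T, hTC, hT⟩ := Set.exists_subset_encard_eq hle
    have hfin : T.Finite := Set.finite_of_encard_eq_coe hT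
    have hcard : hfin.toFinset.card = ⌊b⌋₊ + 1 := by
      rw [hfin.encard_eq_coe_toFinset_card] at hT
      exact_mod_cast hT
    have := h hfin.toFinset (by simpa using hTC.trans hCA) (by
      intro e he f hf
      exact hsepdist C hC e (hTC (by simpa using he)) f (hTC (by simpa using hf)))
    rw [hcard] at this
    have h2 := Nat.lt_floor_add_one b
    push_cast at this
    linarith
  have htop : Metric.packingNumber ε' A ≠ ⊤ := ne_top_of_le_ne_top (ENat.natCast_ne_top _) hpack
  have hfin : (Metric.maximalSeparatedSet ε' A).Finite := by
    rw [← Set.encard_ne_top_iff, Metric.encard_maximalSeparatedSet htop]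
    exact htop
  refine ⟨hfin.toFinset, ?_, ?_⟩
  · apply h
    · simpa using Metric.maximalSeparatedSet_subset
    · intro e he f hf
      exact hsepdist _ Metric.isSeparated_maximalSeparatedSet e (by simpa using he) f
        (by simpa using hf)
  · have := (Metric.isCover_maximalSeparatedSet htop).subset_iUnion_closedBall
    have hc : (ε' : ℝ) = ε := rfl
    simpa [hc] using this

lemma limsup_null {n : ℕ} (T : ℕ → Finset (VV n)) (B : ℕ → Set (VV n)) (t : ℝ) (ht : 0 < t)
    (hcov : ∀ k, B k ⊆ ⋃ c ∈ T k, Metric.closedBall c (1 / 2 ^ k))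
    (hsum : Summable fun k : ℕ => ((T k).card : ℝ) * (2 * (1 / 2 ^ k)) ^ t) :
    μH[t] (⋂ m, ⋃ k, B (k + m)) = 0 := by
  have key := Measure.hausdorffMeasure_le_liminf_tsum (ι := fun m : ℕ => Σ k : ℕ, T (k + m)) t
    (⋂ m, ⋃ k, B (k + m)) (l := Filter.atTop)
    (fun m : ℕ => ENNReal.ofReal (2 * (1 / 2) ^ m))
    (by
      have := (tendsto_pow_atTop_nhds_zero_of_lt_one (r := (1 / 2 : ℝ)) (by norm_num)
        (by norm_num)).const_mul 2
      rw [mul_zero] at this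
      simpa using ENNReal.tendsto_ofReal this)
    (fun m a => Metric.closedBall (a.2 : VV n) (1 / 2 ^ (a.1 + m)))
    (Filter.Eventually.of_forall fun m a => by
      refine (ediam_cball _ (by positivity)).trans ?_
      apply ENNReal.ofReal_le_ofReal
      rw [← one_div_pow]
      gcongr 2 * ?_
      exact pow_le_pow_of_le_one (by norm_num) (by norm_num) (by omega))
    (Filter.Eventually.of_forall fun m x hx => by
      have h1 := Set.mem_iInter.1 hx m
      obtain ⟨k, hk⟩ := Set.mem_iUnion.1 h1
      obtain ⟨c, hc, hxc⟩ := Set.mem_iUnion₂.1 (hcov _ hk)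
      exact Set.mem_iUnion.2 ⟨⟨k, ⟨c, hc⟩⟩, hxc⟩)
  set a : ℕ → ℝ≥0∞ := fun k => ENNReal.ofReal (((T k).card : ℝ) * (2 * (1 / 2 ^ k)) ^ t) with ha
  have hle : ∀ m : ℕ, ∑' i : Σ k : ℕ, T (k + m),
      Metric.ediam (Metric.closedBall (i.2 : VV n) (1 / 2 ^ (i.1 + m))) ^ t ≤ ∑' k, a (k + m) := by
    intro m
    rw [ENNReal.tsum_sigma']
    apply ENNReal.tsum_le_tsum
    intro k
    calc _ ≤ ∑' c : T (k + m), ENNReal.ofReal ((2 * (1 / 2 ^ (k + m))) ^ t) := by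
          apply ENNReal.tsum_le_tsum
          intro c
          rw [← ENNReal.ofReal_rpow_of_nonneg (by positivity) ht.le]
          exact ENNReal.rpow_le_rpow (ediam_cball _ (by positivity)) ht.le
      _ = _ := by
          rw [tsum_fintype, Finset.sum_const, Finset.card_univ, Fintype.card_coe, ha,
            nsmul_eq_mul]
          simp only
          rw [ENNReal.ofReal_mul (by positivity), ENNReal.ofReal_natCast]
  have hfin : ∑' k, a k ≠ ⊤ := by
    rw [ha, ← ENNReal.ofReal_tsum_of_nonneg (fun k => by positivity) hsum]
    exact ENNReal.ofReal_ne_top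
  have hlim := ENNReal.tendsto_sum_nat_add a hfin
  refine le_antisymm (key.trans ?_) zero_le
  rw [← hlim.liminf_eq]
  exact Filter.liminf_le_liminf (Filter.Eventually.of_forall hle)

/-- the smoothed transform -/
noncomputable def Hf {n : ℕ} (ν : Measure (VV n)) (x₀ p : VV n) : ℂ :=
  ∫ x, hh x₀ x * ef ⟪x, p⟫ ∂ν

/-- dyadic energy -/
noncomputable def gk {n : ℕ} (ν : Measure (VV n)) (x₀ : VV n) (k : ℕ) (e : VV n) : ℝ≥0∞ :=
  ∫⁻ r in Set.Icc ((2 : ℝ) ^ k) (2 * 2 ^ k), ‖Hf ν x₀ (r • e)‖ₑ ^ 2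

/-- bad directions at scale `k` -/
def badk {n : ℕ} (ν : Measure (VV n)) (x₀ : VV n) (k : ℕ) : Set (VV n) :=
  {e | ‖e‖ = 1 ∧ ENNReal.ofReal (1 / ((k : ℝ) + 1) ^ 2) < gk ν x₀ k e}

lemma badk_card {n : ℕ} (ν : Measure (VV n)) [IsFiniteMeasure ν] (x₀ : VV n) (s C : ℝ)
    (hC : 0 ≤ C)
    (hE : ∀ R : ℝ, 0 < R → ∫⁻ ζ in Metric.ball 0 (3 * R), ‖nuhat ν ζ‖ₑ ^ 2 ≤
      ENNReal.ofReal (C * R ^ ((n : ℝ) - s))) (k : ℕ) (T : Finset (VV n))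
    (hT : (T : Set (VV n)) ⊆ badk ν x₀ k)
    (hsep : ∀ e ∈ T, ∀ f ∈ T, e ≠ f → 1 / 2 ^ k < dist e f) :
    (T.card : ℝ) ≤ volume.real (Metric.ball (0 : VV n) (1 / 8)) * C * ((k : ℝ) + 1) ^ 2 *
      ((2 : ℝ) ^ k) ^ ((n : ℝ) - s) := by
  have hcn := continuous_nuhat ν
  set v := volume (Metric.ball (0 : VV n) (1 / 8)) with hv
  have hvt : v ≠ ⊤ := measure_ball_lt_top.ne
  have h1 : ∑ e ∈ T, ENNReal.ofReal (1 / ((k : ℝ) + 1) ^ 2) ≤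
      v * ENNReal.ofReal (C * ((2 : ℝ) ^ k) ^ ((n : ℝ) - s)) := by
    calc _ ≤ ∑ e ∈ T, gk ν x₀ k e := Finset.sum_le_sum fun e he => (hT he).2.le
      _ ≤ ∑ e ∈ T, v * ∫⁻ r in Set.Icc ((2 : ℝ) ^ k) (2 * 2 ^ k),
            ∫⁻ ζ in Metric.ball (r • e) (1 / 8), ‖nuhat ν ζ‖ₑ ^ 2 := by
          apply Finset.sum_le_sum
          intro e he
          rw [← lintegral_const_mul' _ _ hvt]
          exact lintegral_mono fun r => hh_pointwise ν x₀ _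
      _ ≤ v * ∫⁻ ζ in Metric.ball 0 (3 * (2 : ℝ) ^ k), ‖nuhat ν ζ‖ₑ ^ 2 := by
          rw [← Finset.mul_sum]
          exact mul_le_mul_right (packing T _ (one_le_pow₀ (by norm_num)) (fun e he => (hT he).1)
            hsep _ (by fun_prop : Continuous fun ζ => ‖nuhat ν ζ‖ₑ ^ 2).measurable) _
      _ ≤ _ := mul_le_mul_right (hE _ (by positivity)) _
  have hv' : v = ENNReal.ofReal (volume.real (Metric.ball (0 : VV n) (1 / 8))) :=
    (ofReal_measureReal hvt).symm
  rw [Finset.sum_const, nsmul_eq_mul, ← ENNReal.ofReal_natCast, hv',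
    ← ENNReal.ofReal_mul (by positivity), ← ENNReal.ofReal_mul (by positivity),
    ENNReal.ofReal_le_ofReal_iff (by positivity), mul_one_div, div_le_iff₀ (by positivity)] at h1
  refine h1.trans (le_of_eq ?_)
  ring

lemma summable_aux (t d b : ℝ) (htd : d < t) :
    Summable fun k : ℕ => b * ((k : ℝ) + 1) ^ 2 * ((2 : ℝ) ^ k) ^ d * (2 * (1 / 2 ^ k)) ^ t := by
  set q : ℝ := (2 : ℝ) ^ (d - t) with hq
  have hq0 : 0 < q := by positivity
  have hq1 : q < 1 := Real.rpow_lt_one_of_one_lt_of_neg (by norm_num) (by linarith)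
  have h1 := summable_pow_mul_geometric_of_norm_lt_one 2 (r := q)
    (by rwa [Real.norm_of_nonneg hq0.le])
  have h2 := ((summable_nat_add_iff 1).2 h1).mul_left (b * 2 ^ t * q⁻¹)
  refine h2.congr fun k => ?_
  have e1 : ((2 : ℝ) ^ k) ^ d * (2 * (1 / 2 ^ k)) ^ t = 2 ^ t * q ^ k := by
    rw [Real.mul_rpow (by norm_num) (by positivity), one_div, Real.inv_rpow (by positivity), hq,
      ← Real.rpow_natCast, ← Real.rpow_mul (by norm_num), ← Real.rpow_mul (by norm_num),
      ← Real.rpow_natCast, ← Real.rpow_mul (by norm_num), ← Real.rpow_neg (by norm_num)]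
    rw [mul_left_comm, ← Real.rpow_add (by norm_num)]
    congr 2
    ring
  rw [mul_assoc (b * ((k : ℝ) + 1) ^ 2), e1, pow_succ q]
  push_cast
  field_simp

lemma dimH_bad {n : ℕ} (ν : Measure (VV n)) [IsFiniteMeasure ν] (x₀ : VV n) (s C : ℝ)
    (hC : 0 ≤ C)
    (hE : ∀ R : ℝ, 0 < R → ∫⁻ ζ in Metric.ball 0 (3 * R), ‖nuhat ν ζ‖ₑ ^ 2 ≤
      ENNReal.ofReal (C * R ^ ((n : ℝ) - s))) :
    dimH (⋂ m, ⋃ k, badk ν x₀ (k + m)) ≤ ENNReal.ofReal ((n : ℝ) - s) := by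
  have hc := fun k : ℕ => exists_cover_of_card_le (badk ν x₀ k) (1 / 2 ^ k) (by positivity)
    (volume.real (Metric.ball (0 : VV n) (1 / 8)) * C * ((k : ℝ) + 1) ^ 2 *
      ((2 : ℝ) ^ k) ^ ((n : ℝ) - s)) (by positivity)
      (fun T hT hsep => badk_card ν x₀ s C hC hE k T hT hsep)
  choose T hcard hcov using hc
  apply dimH_le
  intro t htop
  by_contra! hlt
  have ht : (n : ℝ) - s < t := by
    by_contra! h
    refine absurd hlt (not_lt.2 ?_)
    rw [← ENNReal.ofReal_coe_nnreal]
    exact ENNReal.ofReal_le_ofReal h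
  have ht0 : (0 : ℝ) < t := by
    have : (0 : ℝ≥0∞) < t := lt_of_le_of_lt zero_le hlt
    exact_mod_cast this
  have := limsup_null T (badk ν x₀) t ht0 hcov (by
    refine Summable.of_nonneg_of_le (fun k => by positivity) (fun k => ?_)
      (summable_aux t _ (volume.real (Metric.ball (0 : VV n) (1 / 8)) * C) ht)
    exact mul_le_mul_of_nonneg_right (hcard k) (by positivity))
  rw [this] at htop
  exact ENNReal.zero_ne_top htop

lemma half_line_fin {n : ℕ} (ν : Measure (VV n)) [IsFiniteMeasure ν] (x₀ : VV n) (e : VV n)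
    (he : ‖e‖ = 1) (heX : e ∉ ⋂ m, ⋃ k, badk ν x₀ (k + m)) :
    ∫⁻ r in Set.Ici (1 : ℝ), ‖Hf ν x₀ (r • e)‖ₑ ^ 2 < ⊤ := by
  have hsub : Set.Ici (1 : ℝ) ⊆ ⋃ k : ℕ, Set.Icc ((2 : ℝ) ^ k) (2 * 2 ^ k) := by
    intro r hr
    obtain ⟨k, hk1, hk2⟩ := exists_nat_pow_near (y := (2 : ℝ)) hr (by norm_num)
    refine Set.mem_iUnion.2 ⟨k, hk1, ?_⟩
    rw [pow_succ] at hk2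
    linarith
  have hbd : ∀ p, ‖Hf ν x₀ p‖ ≤ volume.real (Metric.ball (0 : VV n) (1 / 8)) * ν.real Set.univ := by
    intro p
    unfold Hf
    apply norm_integral_le_of_norm_le_const
    exact Filter.Eventually.of_forall fun x => by simpa using norm_hh_le x₀ x
  set M := volume.real (Metric.ball (0 : VV n) (1 / 8)) * ν.real Set.univ
  have hgfin : ∀ k, gk ν x₀ k e ≠ ⊤ := by
    intro k
    have : gk ν x₀ k e ≤ ∫⁻ r in Set.Icc ((2 : ℝ) ^ k) (2 * 2 ^ k), ENNReal.ofReal M ^ 2 := by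
      unfold gk
      apply lintegral_mono
      intro r
      simp only
      rw [← ofReal_norm]
      gcongr
      exact hbd _
    refine ne_top_of_le_ne_top ?_ this
    rw [lintegral_const]
    simp [ENNReal.mul_eq_top]
  simp only [Set.mem_iInter, Set.mem_iUnion, not_forall, not_exists] at heX
  obtain ⟨m, hm⟩ := heX
  have hle : ∀ k, gk ν x₀ (k + m) e ≤ ENNReal.ofReal (1 / (((k + m : ℕ) : ℝ) + 1) ^ 2) := by
    intro k
    by_contra! hlt
    exact hm k ⟨he, hlt⟩
  have hsumm : Summable fun k => (gk ν x₀ k e).toReal := by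
    rw [← summable_nat_add_iff m]
    have h1 : Summable fun k : ℕ => 1 / (((k + m : ℕ) : ℝ) + 1) ^ 2 := by
      have := (summable_nat_add_iff (m + 1)).2 (Real.summable_one_div_nat_pow.2 (one_lt_two))
      refine this.congr fun k => ?_
      push_cast
      ring
    refine Summable.of_nonneg_of_le (fun k => ENNReal.toReal_nonneg) (fun k => ?_) h1
    exact ENNReal.toReal_le_of_le_ofReal (by positivity) (hle k)
  calc _ ≤ ∫⁻ r in ⋃ k : ℕ, Set.Icc ((2 : ℝ) ^ k) (2 * 2 ^ k), ‖Hf ν x₀ (r • e)‖ₑ ^ 2 :=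
        lintegral_mono_set hsub
    _ ≤ ∑' k, gk ν x₀ k e := lintegral_iUnion_le _ _
    _ = ∑' k, ENNReal.ofReal (gk ν x₀ k e).toReal := by
        congr 1; ext k; rw [ENNReal.ofReal_toReal (hgfin k)]
    _ < ⊤ := by
        rw [← ENNReal.ofReal_tsum_of_nonneg (fun k => ENNReal.toReal_nonneg) hsumm]
        exact ENNReal.ofReal_lt_top

lemma full_line_fin {n : ℕ} (ν : Measure (VV n)) [IsFiniteMeasure ν] (x₀ : VV n) (e : VV n)
    (he : ‖e‖ = 1) (heX : e ∉ ⋂ m, ⋃ k, badk ν x₀ (k + m))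
    (heX' : -e ∉ ⋂ m, ⋃ k, badk ν x₀ (k + m)) :
    ∫⁻ r : ℝ, ‖Hf ν x₀ (r • e)‖ₑ ^ 2 < ⊤ := by
  have hbd : ∀ p, ‖Hf ν x₀ p‖ ≤ volume.real (Metric.ball (0 : VV n) (1 / 8)) * ν.real Set.univ := by
    intro p
    unfold Hf
    apply norm_integral_le_of_norm_le_const
    exact Filter.Eventually.of_forall fun x => by simpa using norm_hh_le x₀ x
  set M := volume.real (Metric.ball (0 : VV n) (1 / 8)) * ν.real Set.univ
  have h1 := half_line_fin ν x₀ e he heX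
  have h2 := half_line_fin ν x₀ (-e) (by simpa using he) heX'
  have h3 : ∫⁻ r in Set.Icc (-1 : ℝ) 1, ‖Hf ν x₀ (r • e)‖ₑ ^ 2 < ⊤ := by
    have : ∫⁻ r in Set.Icc (-1 : ℝ) 1, ‖Hf ν x₀ (r • e)‖ₑ ^ 2 ≤
        ∫⁻ r in Set.Icc (-1 : ℝ) 1, ENNReal.ofReal M ^ 2 := by
      apply lintegral_mono
      intro r
      simp only
      rw [← ofReal_norm]
      gcongr
      exact hbd _
    refine lt_of_le_of_lt this ?_
    rw [lintegral_const]
    simp [ENNReal.mul_lt_top_iff]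
  have h4 : ∫⁻ r in Set.Iic (-1 : ℝ), ‖Hf ν x₀ (r • e)‖ₑ ^ 2 =
      ∫⁻ r in Set.Ici (1 : ℝ), ‖Hf ν x₀ (r • -e)‖ₑ ^ 2 := by
    have hmp := Measure.measurePreserving_neg (volume : Measure ℝ)
    have := hmp.setLIntegral_comp_preimage_emb (MeasurableEquiv.neg ℝ).measurableEmbedding
      (fun r => ‖Hf ν x₀ (r • e)‖ₑ ^ 2) (Set.Iic (-1 : ℝ))
    rw [← this]
    simp
  have hun : (Set.univ : Set ℝ) ⊆ Set.Icc (-1 : ℝ) 1 ∪ (Set.Ici (1 : ℝ) ∪ Set.Iic (-1)) := by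
    intro r _
    simp only [Set.mem_union, Set.mem_Icc, Set.mem_Ici, Set.mem_Iic]
    rcases le_total r (-1) with h | h
    · tauto
    · rcases le_total r 1 with h' | h' <;> tauto
  rw [← setLIntegral_univ]
  refine lt_of_le_of_lt ((lintegral_mono_set hun).trans ((lintegral_union_le _ _ _).trans
    (add_le_add_right (lintegral_union_le _ _ _) _))) ?_
  rw [h4]
  exact ENNReal.add_lt_top.2 ⟨h3, ENNReal.add_lt_top.2 ⟨h1, h2⟩⟩

lemma main_piece {n : ℕ} (ν : Measure (VV n)) [IsFiniteMeasure ν] (x₀ : VV n) (s C : ℝ)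
    (hC : 0 ≤ C)
    (hg : ∀ᵐ x ∂ν, ∀ r : ℝ, 0 < r → ν (Metric.ball x r) ≤ ENNReal.ofReal (C * r ^ s))
    (hx₀ : ∀ᵐ x ∂ν, ‖x - x₀‖ ≤ 1) :
    ∃ X : Set (VV n), X ⊆ Metric.sphere (0 : VV n) 1 ∧ dimH X ≤ ENNReal.ofReal ((n : ℝ) - s) ∧
      ∀ e ∈ Metric.sphere (0 : VV n) 1, e ∉ X → ∀ Z : Set ℝ, MeasurableSet Z → volume Z = 0 →
        ν ((fun x => ⟪x, e⟫) ⁻¹' Z) = 0 := by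
  obtain ⟨C', hC', hE⟩ := energy_growth ν s C hC hg
  set Y := ⋂ m, ⋃ k, badk ν x₀ (k + m) with hY
  have hdim := dimH_bad ν x₀ s C' hC' hE
  have hYs : Y ⊆ Metric.sphere (0 : VV n) 1 := by
    intro e he
    obtain ⟨k, hk⟩ := Set.mem_iUnion.1 (Set.mem_iInter.1 he 0)
    simpa using hk.1
  refine ⟨Y ∪ (fun x => -x) '' Y, ?_, ?_, ?_⟩
  · refine Set.union_subset hYs ?_
    rintro _ ⟨e, he, rfl⟩
    simpa using hYs he
  · have hneg : dimH ((fun x => -x) '' Y) = dimH Y :=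
      (IsometryEquiv.neg (VV n)).isometry.dimH_image Y
    rw [dimH_union, hneg]
    exact max_le hdim hdim
  · intro e he heX Z hZ hZ0
    have he1 : ‖e‖ = 1 := by simpa using he
    have hL := full_line_fin ν x₀ e he1 (fun h => heX (Or.inl h))
      (fun h => heX (Or.inr ⟨-e, h, by simp⟩))
    refine ac_of_L2 ν e (hh x₀) (continuous_hh x₀) _ (norm_hh_le x₀)
      (1 / 2 * volume.real (Metric.ball (0 : VV n) (1 / 8))) ?_ ?_ ?_ Z hZ hZ0
    · have : 0 < volume.real (Metric.ball (0 : VV n) (1 / 8)) :=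
        ENNReal.toReal_pos (Metric.measure_ball_pos _ _ (by norm_num)).ne' measure_ball_lt_top.ne
      positivity
    · filter_upwards [hx₀] with x hx using hh_re x₀ x hx
    · simpa only [Hf, real_inner_smul_right] using hL

end Helpers

/-- **Strong projection theorem with exceptional-set dimension bound, case `m = 1`, `s > 1`.**
If `E ⊆ ℝⁿ` is `𝓗ˢ`-measurable with `0 < 𝓗ˢ(E) < ∞` where `s = dim_H E > 1`, then there is
a set `X` of unit vectors with `dim_H X ≤ n − s` such that for every unit vector `e ∉ X`
and every `𝓗ˢ`-measurable `F ⊆ E` with `𝓗ˢ(F) > 0`, the set `{⟨x,e⟩ : x ∈ F} ⊆ ℝ` has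
positive Lebesgue measure. -/
theorem strong_line_projection_positive_measure (n : ℕ) (hn : 2 ≤ n) (s : ℝ)
    (hs : 1 < s) (E : Set (EuclideanSpace ℝ (Fin n)))
    (hdimE : dimH E = ENNReal.ofReal s)
    (hE : NullMeasurableSet E μH[s])
    (hE0 : 0 < μH[s] E) (hEfin : μH[s] E < ⊤) :
    ∃ X : Set (EuclideanSpace ℝ (Fin n)),
      X ⊆ Metric.sphere (0 : EuclideanSpace ℝ (Fin n)) 1 ∧
      dimH X ≤ ENNReal.ofReal ((n : ℝ) - s) ∧
      ∀ e ∈ Metric.sphere (0 : EuclideanSpace ℝ (Fin n)) 1, e ∉ X →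
        ∀ F : Set (EuclideanSpace ℝ (Fin n)), F ⊆ E →
          NullMeasurableSet F μH[s] → 0 < μH[s] F →
          0 < volume ((fun x => ⟪x, e⟫) '' F) := by
  set μ : Measure (EuclideanSpace ℝ (Fin n)) := (μH[s]).restrict E with hμ
  have hfin : IsFiniteMeasure μ := ⟨by simpa [hμ] using hEfin⟩
  have hs0 : 0 < s := by linarith
  set x₀ : ℕ → EuclideanSpace ℝ (Fin n) := TopologicalSpace.denseSeq _ with hx₀
  set G : ℕ → ℕ → Set (EuclideanSpace ℝ (Fin n)) := fun j i =>
    goodSet μ s j ∩ Metric.closedBall (x₀ i) 1 with hG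
  have hGm : ∀ j i, MeasurableSet (G j i) := fun j i =>
    ((isClosed_goodSet μ s j).inter Metric.isClosed_closedBall).measurableSet
  have hpiece : ∀ j i, _ := fun j i =>
    main_piece (μ.restrict (G j i)) (x₀ i) s
      (((j : ℝ) + 1) + μ.real Set.univ * ((j : ℝ) + 1) ^ s) (by positivity)
      (by
        filter_upwards [ae_restrict_mem (hGm j i)] with x hx r hr
        refine (Measure.restrict_apply_le _ _).trans ?_
        rcases lt_or_ge r (1 / ((j : ℝ) + 1)) with h | h
        · refine (hx.1 r hr h).trans (ENNReal.ofReal_le_ofReal ?_)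
          refine mul_le_mul_of_nonneg_right ?_ (by positivity)
          have : 0 ≤ μ.real Set.univ * ((j : ℝ) + 1) ^ s := by positivity
          linarith
        · refine (measure_mono (Set.subset_univ _)).trans ?_
          rw [← ofReal_measureReal]
          apply ENNReal.ofReal_le_ofReal
          have h1 : 1 ≤ (((j : ℝ) + 1) * r) ^ s := by
            apply Real.one_le_rpow _ hs0.le
            rw [div_le_iff₀ (by positivity)] at h
            linarith
          rw [Real.mul_rpow (by positivity) hr.le] at h1
          have h2 : 0 ≤ μ.real Set.univ := measureReal_nonneg
          have h3 : 0 ≤ ((j : ℝ) + 1) * r ^ s := by positivity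
          nlinarith)
      (by
        filter_upwards [ae_restrict_mem (hGm j i)] with x hx
        simpa [dist_eq_norm] using hx.2)
  choose X hXs hXd hX using hpiece
  refine ⟨⋃ j, ⋃ i, X j i, ?_, ?_, ?_⟩
  · exact Set.iUnion_subset fun j => Set.iUnion_subset fun i => hXs j i
  · rw [dimH_iUnion]
    refine iSup_le fun j => ?_
    rw [dimH_iUnion]
    exact iSup_le fun i => hXd j i
  · intro e he heX F hFE _ hF0
    by_contra hcon
    have hnull : volume ((fun x => ⟪x, e⟫) '' F) = 0 := by
      simpa using hcon
    set Z := toMeasurable volume ((fun x => ⟪x, e⟫) '' F) with hZ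
    have hZm : MeasurableSet Z := measurableSet_toMeasurable _ _
    have hZ0 : volume Z = 0 := by rw [hZ, measure_toMeasurable, hnull]
    have hPm : MeasurableSet ((fun x : EuclideanSpace ℝ (Fin n) => ⟪x, e⟫) ⁻¹' Z) :=
      (by fun_prop : Continuous fun x : EuclideanSpace ℝ (Fin n) => ⟪x, e⟫).measurable hZm
    have hz : ∀ j i, μ ((fun x => ⟪x, e⟫) ⁻¹' Z ∩ G j i) = 0 := by
      intro j i
      rw [← Measure.restrict_apply hPm]
      refine hX j i e he (fun h => heX ?_) Z hZm hZ0
      exact Set.mem_iUnion.2 ⟨j, Set.mem_iUnion.2 ⟨i, h⟩⟩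
    have hbad : μ (⋃ j, goodSet μ s j)ᶜ = 0 :=
      le_antisymm ((Measure.restrict_le_self _).trans (hausdorff_bad_null μ s hs0).le) zero_le
    have hsub : F ⊆ (⋃ j, ⋃ i, (fun x => ⟪x, e⟫) ⁻¹' Z ∩ G j i) ∪ (⋃ j, goodSet μ s j)ᶜ := by
      intro x hx
      by_cases hxg : x ∈ ⋃ j, goodSet μ s j
      · left
        obtain ⟨j, hj⟩ := Set.mem_iUnion.1 hxg
        obtain ⟨i, hi⟩ := (TopologicalSpace.denseRange_denseSeq
          (EuclideanSpace ℝ (Fin n))).exists_dist_lt x one_pos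
        exact Set.mem_iUnion.2 ⟨j, Set.mem_iUnion.2 ⟨i,
          subset_toMeasurable _ _ (Set.mem_image_of_mem _ hx), hj, hi.le⟩⟩
      · exact Or.inr hxg
    have hμF : μ F = 0 := by
      refine measure_mono_null hsub (measure_union_null ?_ hbad)
      exact measure_iUnion_null fun j => measure_iUnion_null fun i => hz j i
    rw [hμ, Measure.restrict_eq_self _ hFE] at hμF
    exact hF0.ne' hμF
end
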